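/- Let m ≥ 1, n ≥ 1, D ≥ 1 be integers. For every positive integer N there exists a constant γ depending only on m, n, D, N such that the following holds. Let S ⊆ ℝ^n be a finite set with |S| ≤ N and diameter at most 1, and for each x ∈ S let G(x) ⊆ 𝒫⃗ be convex. Suppose that for every subset S′ ⊆ S with |S′| ≤ 2^(D·binom(n+m−1, n)) there exists F^{S′} ∈ Ċ^m(ℝ^n,ℝ^D) with ‖F^{S′}‖_{Ċ^m(ℝ^n,ℝ^D)} ≤ 1 and J_x F^{S′} ∈ G(x) for all x ∈ S′. Then there exists F ∈ Ċ^m(ℝ^n,ℝ^D) with ‖F‖_{Ċ^m(ℝ^n,ℝ^D)} ≤ γ and J_x F ∈ G(x) for all x ∈ S. -/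

import Mathlib

open scoped BigOperators Classical

noncomputable section

/-- `En n` is Euclidean space `ℝ^n`. -/
abbrev En (n : ℕ) : Type := EuclideanSpace ℝ (Fin n)

/-- First-order partial derivative `∂_i f` in the `i`-th coordinate direction. -/
noncomputable def pd1 {n : ℕ} (i : Fin n) (f : En n → ℝ) : En n → ℝ :=
  fun x => fderiv ℝ f x (EuclideanSpace.single i 1)

/-- Higher-order partial derivative `∂^α f` for a multi-index `α`. -/
noncomputable def pdalpha {n : ℕ} (α : Fin n → ℕ) (f : En n → ℝ) : En n → ℝ :=
  (List.finRange n).foldr (fun i g => (pd1 i)^[α i] g) f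

/-- First-order partial derivative within a set `s`. -/
noncomputable def pd1W {n : ℕ} (s : Set (En n)) (i : Fin n) (f : En n → ℝ) : En n → ℝ :=
  fun x => fderivWithin ℝ f s x (EuclideanSpace.single i 1)

/-- Higher-order partial derivative `∂^α f` within a set `s`. -/
noncomputable def pdalphaW {n : ℕ} (s : Set (En n)) (α : Fin n → ℕ) (f : En n → ℝ) : En n → ℝ :=
  (List.finRange n).foldr (fun i g => (pd1W s i)^[α i] g) f

/-- `∂^α` of a multivariate polynomial (formal derivative). -/
noncomputable def polyPD {n : ℕ} (α : Fin n → ℕ) (p : MvPolynomial (Fin n) ℝ) :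
    MvPolynomial (Fin n) ℝ :=
  (List.finRange n).foldr (fun i q => (fun r => MvPolynomial.pderiv i r)^[α i] q) p

/-- The value `∂^α p (x)` of the `α`-th derivative of a polynomial at `x`. -/
noncomputable def polyPDval {n : ℕ} (α : Fin n → ℕ) (p : MvPolynomial (Fin n) ℝ) (x : En n) : ℝ :=
  MvPolynomial.eval (fun i => x i) (polyPD α p)

/-- The `(m-1)`-jet (Taylor polynomial of degree `≤ m-1`) of `f` at `x`. -/
noncomputable def jetScalar (m : ℕ) {n : ℕ} (f : En n → ℝ) (x : En n) :
    MvPolynomial (Fin n) ℝ :=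
  ∑ α ∈ (Finset.univ : Finset (Fin n → Fin m)).filter (fun α => (∑ i, (α i : ℕ)) ≤ m - 1),
    MvPolynomial.C (pdalpha (fun i => (α i : ℕ)) f x / ((∏ i, Nat.factorial (α i : ℕ) : ℕ) : ℝ))
      * ∏ i, (MvPolynomial.X i - MvPolynomial.C (x i)) ^ ((α i : ℕ))

/-- The `(m-1)`-jet of `f` at `x`, with derivatives taken within a set `s`. -/
noncomputable def jetScalarW (m : ℕ) {n : ℕ} (s : Set (En n)) (f : En n → ℝ) (x : En n) :
    MvPolynomial (Fin n) ℝ :=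
  ∑ α ∈ (Finset.univ : Finset (Fin n → Fin m)).filter (fun α => (∑ i, (α i : ℕ)) ≤ m - 1),
    MvPolynomial.C (pdalphaW s (fun i => (α i : ℕ)) f x / ((∏ i, Nat.factorial (α i : ℕ) : ℕ) : ℝ))
      * ∏ i, (MvPolynomial.X i - MvPolynomial.C (x i)) ^ ((α i : ℕ))

/-- The vector-valued `(m-1)`-jet `J_x F ∈ 𝒫⃗` of `F : ℝ^n → ℝ^D` at `x`. -/
noncomputable def jetD (m : ℕ) {n D : ℕ} (F : En n → Fin D → ℝ) (x : En n) :
    Fin D → MvPolynomial (Fin n) ℝ :=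
  fun j => jetScalar m (fun y => F y j) x

/-- The vector-valued `(m-1)`-jet of `F` at `x`, derivatives within `s`. -/
noncomputable def jetDW (m : ℕ) {n D : ℕ} (s : Set (En n)) (F : En n → Fin D → ℝ) (x : En n) :
    Fin D → MvPolynomial (Fin n) ℝ :=
  fun j => jetScalarW m s (fun y => F y j) x

/-- Truncation of a polynomial to total degree `≤ k`. -/
noncomputable def truncDeg {n : ℕ} (k : ℕ) (p : MvPolynomial (Fin n) ℝ) :
    MvPolynomial (Fin n) ℝ :=
  ∑ s ∈ p.support.filter (fun s => (s.sum fun _ e => e) ≤ k),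
    MvPolynomial.monomial s (MvPolynomial.coeff s p)

/-- The degree-`k` Taylor truncation of a polynomial at `x` (the jet `J_x p` of order `k`). -/
noncomputable def taylorTrunc {n : ℕ} (k : ℕ) (x : En n) (p : MvPolynomial (Fin n) ℝ) :
    MvPolynomial (Fin n) ℝ :=
  MvPolynomial.bind₁ (fun i => MvPolynomial.X i - MvPolynomial.C (x i))
    (truncDeg k (MvPolynomial.bind₁ (fun i => MvPolynomial.X i + MvPolynomial.C (x i)) p))

/-- The ring multiplication `p ⊙_x q := J_x(pq)` on degree-`k` jets at `x`. -/
noncomputable def odot {n : ℕ} (k : ℕ) (x : En n) (p q : MvPolynomial (Fin n) ℝ) :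
    MvPolynomial (Fin n) ℝ :=
  taylorTrunc k x (p * q)

/-- `(Γ x M)_{x ∈ E, M > 0}` is a shape field with jets of degree `≤ k` and `d` components:
each `Γ x M` is a convex set of `d`-tuples of polynomials of degree `≤ k`, monotone in `M`. -/
def IsShapeField {N : ℕ} (k d : ℕ) (E : Finset (En N))
    (Γ : En N → ℝ → Set (Fin d → MvPolynomial (Fin N) ℝ)) : Prop :=
  (∀ x ∈ E, ∀ M : ℝ, 0 < M → Convex ℝ (Γ x M)) ∧
  (∀ x ∈ E, ∀ M : ℝ, 0 < M → ∀ P ∈ Γ x M, ∀ j, (P j).totalDegree ≤ k) ∧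
  (∀ x ∈ E, ∀ M' M : ℝ, 0 < M' → M' ≤ M → Γ x M' ⊆ Γ x M)

/-- `(C_w, δmax)`-convexity of a shape field with jets of degree `≤ k`. -/
def SFConvex {N : ℕ} (k d : ℕ) (E : Finset (En N))
    (Γ : En N → ℝ → Set (Fin d → MvPolynomial (Fin N) ℝ)) (Cw δmax : ℝ) : Prop :=
  ∀ δ : ℝ, 0 < δ → δ ≤ δmax → ∀ x ∈ E, ∀ M : ℝ, 0 < M →
    ∀ P₁ P₂ : Fin d → MvPolynomial (Fin N) ℝ, P₁ ∈ Γ x M → P₂ ∈ Γ x M →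
    ∀ Q₁ Q₂ : MvPolynomial (Fin N) ℝ, Q₁.totalDegree ≤ k → Q₂.totalDegree ≤ k →
    (∀ α : Fin N → ℕ, (∑ i, α i) ≤ k → ∀ j,
      |polyPDval α (P₁ j - P₂ j) x| ≤ M * δ ^ (k + 1 - ∑ i, α i)) →
    (∀ α : Fin N → ℕ, (∑ i, α i) ≤ k →
      |polyPDval α Q₁ x| ≤ δ ^ (-((∑ i, α i : ℕ) : ℤ)) ∧
      |polyPDval α Q₂ x| ≤ δ ^ (-((∑ i, α i : ℕ) : ℤ))) →
    odot k x Q₁ Q₁ + odot k x Q₂ Q₂ = 1 →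
    (fun j => odot k x (odot k x Q₁ Q₁) (P₁ j) + odot k x (odot k x Q₂ Q₂) (P₂ j))
      ∈ Γ x (Cw * M)

/-- `‖(P^x)_{x ∈ S}‖_{Ẇ^m(S)} ≤ M` : the homogeneous Whitney seminorm bound. -/
def WSemiLE (m : ℕ) {N d : ℕ} (S : Finset (En N))
    (P : En N → Fin d → MvPolynomial (Fin N) ℝ) (M : ℝ) : Prop :=
  ∀ x ∈ S, ∀ y ∈ S, x ≠ y → ∀ α : Fin N → ℕ, (∑ i, α i) ≤ m - 1 → ∀ j,
    |polyPDval α (P x j - P y j) x| ≤ M * dist x y ^ (m - ∑ i, α i)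

/-- The homogeneous Whitney seminorm `‖(P^x)_{x ∈ S}‖_{Ẇ^m(S)}`. -/
noncomputable def WNormHomog (m : ℕ) {N d : ℕ} (S : Finset (En N))
    (P : En N → Fin d → MvPolynomial (Fin N) ℝ) : ℝ :=
  sSup {r : ℝ | ∃ x ∈ S, ∃ y ∈ S, x ≠ y ∧ ∃ α : Fin N → ℕ, (∑ i, α i) ≤ m - 1 ∧ ∃ j : Fin d,
    r = |polyPDval α (P x j - P y j) x| / dist x y ^ (m - ∑ i, α i)}

/-- The lower-order part of the Whitney norm. -/
noncomputable def WNormLow (m : ℕ) {N d : ℕ} (S : Finset (En N))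
    (P : En N → Fin d → MvPolynomial (Fin N) ℝ) : ℝ :=
  sSup {r : ℝ | ∃ x ∈ S, ∃ α : Fin N → ℕ, (∑ i, α i) ≤ m - 1 ∧ ∃ j : Fin d,
    r = |polyPDval α (P x j) x|}

/-- The Whitney norm `‖(P^x)_{x ∈ S}‖_{W^m(S)}`. -/
noncomputable def WNormFull (m : ℕ) {N d : ℕ} (S : Finset (En N))
    (P : En N → Fin d → MvPolynomial (Fin N) ℝ) : ℝ :=
  WNormLow m S P + WNormHomog m S P

/-- `‖F‖_{C^m} ≤ M`: all partials of order `≤ m` of all components bounded by `M`. -/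
def CmLE (m : ℕ) {n D : ℕ} (F : En n → Fin D → ℝ) (M : ℝ) : Prop :=
  ∀ α : Fin n → ℕ, (∑ i, α i) ≤ m → ∀ x : En n, ∀ j, |pdalpha α (fun y => F y j) x| ≤ M

/-- `‖F‖_{Ċ^m} ≤ M`: all partials of order `= m` of all components bounded by `M`. -/
def CmHomogLE (m : ℕ) {n D : ℕ} (F : En n → Fin D → ℝ) (M : ℝ) : Prop :=
  ∀ α : Fin n → ℕ, (∑ i, α i) = m → ∀ x : En n, ∀ j, |pdalpha α (fun y => F y j) x| ≤ M

/-- `‖F‖_{C^{m-1,1}} ≤ M`. -/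
def Cm11LE (m : ℕ) {n D : ℕ} (F : En n → Fin D → ℝ) (M : ℝ) : Prop :=
  (∀ α : Fin n → ℕ, (∑ i, α i) ≤ m - 1 → ∀ x : En n, ∀ j,
    |pdalpha α (fun y => F y j) x| ≤ M) ∧
  (∀ α : Fin n → ℕ, (∑ i, α i) = m - 1 → ∀ j, ∀ x y : En n,
    |pdalpha α (fun z => F z j) x - pdalpha α (fun z => F z j) y| ≤ M * dist x y)

/-- A closed cube in `ℝ^n` with lower corner `a` and side length `δ`. -/
def cube {n : ℕ} (a : En n) (δ : ℝ) : Set (En n) := {y | ∀ i, a i ≤ y i ∧ y i ≤ a i + δ}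

/-- The embedding `ℝ^n → ℝ^{n+D}`, `x ↦ (x, 0)`. -/
noncomputable def embed (n D : ℕ) (x : En n) : En (n + D) :=
  (EuclideanSpace.equiv (Fin (n + D)) ℝ).symm
    (Fin.append (fun i : Fin n => x i) (fun _ : Fin D => (0 : ℝ)))

/-- The projection `ℝ^{n+D} → ℝ^n`, `(x, ξ) ↦ x`. -/
noncomputable def projn (n D : ℕ) (z : En (n + D)) : En n :=
  (EuclideanSpace.equiv (Fin n) ℝ).symm (fun i => z (Fin.castAdd D i))

/-- Restriction of a polynomial on `ℝ^{n+D}` to `ℝ^n × {0}`, as a polynomial on `ℝ^n`. -/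
noncomputable def restrict0 (n D : ℕ) (p : MvPolynomial (Fin (n + D)) ℝ) :
    MvPolynomial (Fin n) ℝ :=
  MvPolynomial.aeval
    (Fin.append (fun i : Fin n => (MvPolynomial.X i : MvPolynomial (Fin n) ℝ))
      (fun _ : Fin D => 0)) p


namespace WFP
open IsLocalRing

theorem compl_basis {k E : Type*} [Field k] [AddCommGroup E] [Module k E] [FiniteDimensional k E]
    (R N : Submodule k E) (h : R ≤ N) :
    ∃ (g : ℕ) (v : Fin g → E), (∀ i, v i ∈ N) ∧ Module.finrank k R + g = Module.finrank k N ∧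
      ∀ c : Fin g → k, ∑ i, c i • v i ∈ R → ∀ i, c i = 0 := by
  obtain ⟨R2, hR⟩ := Submodule.exists_isCompl (R.submoduleOf N)
  have hR1 : Module.finrank k (R.submoduleOf N) = Module.finrank k R :=
    (Submodule.submoduleOfEquivOfLe h).finrank_eq
  refine ⟨Module.finrank k R2, fun i => ((Module.finBasis k R2 i : N) : E), fun i => Submodule.coe_mem _, ?_, ?_⟩
  · rw [← hR1]; exact Submodule.finrank_add_eq_of_isCompl hR
  · intro c hc
    have h1 : (∑ i, c i • Module.finBasis k R2 i) = 0 := by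
      have : ((∑ i, c i • Module.finBasis k R2 i : R2) : N) ∈ R.submoduleOf N ⊓ R2 := by
        refine ⟨?_, Submodule.coe_mem _⟩
        show _ ∈ Submodule.comap N.subtype R
        rw [Submodule.mem_comap]
        simpa using hc
      rw [hR.inf_eq_bot, Submodule.mem_bot] at this
      exact Subtype.ext this
    exact fun i => (Fintype.linearIndependent_iff.1 (Module.finBasis k R2).linearIndependent) _ h1 i

section Count
variable {K : Type*} [Field K] (A : ValuationSubring K) {ι : Type*} [Fintype ι]
  {V : Type*} [AddCommGroup V] [Module K V] [FiniteDimensional K V]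

/-- coordinatewise residue map -/
def rho : (ι → A) →ₛₗ[residue A] (ι → ResidueField A) where
  toFun s := fun i => residue A (s i)
  map_add' s t := by ext i; simp
  map_smul' c s := by ext i; simp

def phiA (lam : ι → V) : (ι → A) →ₗ[A] V where
  toFun s := ∑ i, (s i) • lam i
  map_add' s t := by simp [add_smul, Finset.sum_add_distrib]
  map_smul' c s := by simp [mul_smul, Finset.smul_sum]

instance : RingHomSurjective (residue A) := ⟨residue_surjective⟩

def RR (M : Submodule A (ι → A)) : Submodule (ResidueField A) (ι → ResidueField A) :=
  M.map (rho A)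

def Cl (lam : ι → V) (M : Submodule A (ι → A)) (W : Submodule A V) (n : ℕ) : Prop :=
  ∃ Y : Submodule K V, (∀ y ∈ Y, y ∈ W → ∃ s ∈ M, rho A s = 0 ∧ phiA A lam s = y) ∧
    n ≤ Module.finrank (ResidueField A) (RR A M) * 2 ^ Module.finrank K Y

theorem scale_lemma {g : Type*} [Fintype g] (c : g → K) (i₁ : g) (h : c i₁ ≠ 0)  :
    ∃ i₀, c i₀ ≠ 0 ∧ (∀ i, (c i₀)⁻¹ * c i ∈ A) ∧ A.valuation (c i₁) ≤ A.valuation (c i₀) := by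
  obtain ⟨i₀, -, hi⟩ := Finset.exists_max_image Finset.univ (fun i => A.valuation (c i)) ⟨i₁, by simp⟩
  have h0 : c i₀ ≠ 0 := by
    intro h0
    have := hi i₁ (by simp)
    simp [h0] at this
    exact h this
  refine ⟨i₀, h0, fun i => ?_, hi _ (by simp)⟩
  rw [← A.valuation_le_one_iff, map_mul, map_inv₀]
  have hv : A.valuation (c i₀) ≠ 0 := by simpa using h0
  rw [inv_mul_le_one₀ (zero_lt_iff.mpr hv)]
  exact hi i (by simp)

/-- The heart of the step: extending the free subspace by lost directions. -/
theorem step_core (lam : ι → V) (N : Submodule A (ι → A)) (W W' : Submodule A V)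
    (hW : W ≤ W') (hN : ∀ s ∈ N, phiA A lam s ∈ W')
    (M : Submodule A (ι → A)) (hM : ∀ s, s ∈ M ↔ s ∈ N ∧ phiA A lam s ∈ W)
    (Y : Submodule K V) (hY : ∀ y ∈ Y, y ∈ W' → ∃ s ∈ N, rho A s = 0 ∧ phiA A lam s = y) :
    ∃ Y2 : Submodule K V, (∀ y ∈ Y2, y ∈ W → ∃ s ∈ M, rho A s = 0 ∧ phiA A lam s = y) ∧
      Module.finrank K Y2 + Module.finrank (ResidueField A) (RR A M)
        = Module.finrank K Y + Module.finrank (ResidueField A) (RR A N) := by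
  have hMN : RR A M ≤ RR A N := Submodule.map_mono (fun s hs => ((hM s).1 hs).1)
  obtain ⟨g, v, hvN, hdim, hind0⟩ := compl_basis _ _ hMN
  have hlift : ∀ i : Fin g, ∃ s ∈ N, rho A s = v i := fun i => hvN i
  choose s hsN hs using hlift
  -- key independence
  have hind : ∀ c : Fin g → A, (∑ i, residue A (c i) • v i) ∈ RR A M →
      ∀ i, residue A (c i) = 0 := fun c hc => hind0 _ hc
  -- scaled contradiction
  have hkey0 : ∀ (c : Fin g → A) (y : V), y ∈ Y → y + ∑ i, (c i : K) • phiA A lam (s i) ∈ W →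
      ∃ p ∈ N, rho A p = 0 ∧ phiA A lam p = y ∧ (p + ∑ i, c i • s i) ∈ M ∧ ∀ i, residue A (c i) = 0 := by
    intro c y hy hw
    have hsum : (∑ i, c i • s i) ∈ N := Submodule.sum_mem _ fun i _ => N.smul_mem _ (hsN i)
    have hphi : phiA A lam (∑ i, c i • s i) = ∑ i, (c i : K) • phiA A lam (s i) := by
      simp only [map_sum, map_smul]; rfl
    have hyW : y ∈ W' := by
      have := W'.sub_mem (hW hw) (hN _ hsum)
      rw [hphi] at this; simpa using this
    obtain ⟨p, hpN, hp0, hpy⟩ := hY y hy hyW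
    have hmem : (p + ∑ i, c i • s i) ∈ M := by
      rw [hM]; refine ⟨N.add_mem hpN hsum, ?_⟩
      rw [map_add, hphi, hpy]; exact hw
    refine ⟨p, hpN, hp0, hpy, hmem, hind c ?_⟩
    have := Submodule.mem_map_of_mem (f := rho A) hmem
    rw [map_add, hp0, zero_add, map_sum] at this
    simp only [map_smulₛₗ, hs] at this
    exact this
  have hkey : ∀ (c : Fin g → K) (y : V), y ∈ Y → y + ∑ i, c i • phiA A lam (s i) ∈ W →
      ∀ i, A.valuation (c i) < 1 := by
    intro c y hy hw i
    by_contra hcon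
    push Not at hcon
    have hci : c i ≠ 0 := by intro h; simp [h] at hcon
    obtain ⟨i₀, h0, hA, hle⟩ := scale_lemma A c i hci
    have hinv : (c i₀)⁻¹ ∈ A := by
      rw [← A.valuation_le_one_iff, map_inv₀]
      exact inv_le_one_of_one_le₀ (hcon.trans hle)
    have hw' := W.smul_mem (⟨_, hinv⟩ : A) hw
    have : (⟨_, hinv⟩ : A) • (y + ∑ i, c i • phiA A lam (s i)) =
        (c i₀)⁻¹ • y + ∑ i, (((⟨_, hA i⟩ : A)) : K) • phiA A lam (s i) := by
      change (c i₀)⁻¹ • (y + ∑ i, c i • phiA A lam (s i)) = _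
      simp [smul_add, Finset.smul_sum, mul_smul]
    rw [this] at hw'
    obtain ⟨-, -, -, -, -, h⟩ := hkey0 (fun i => ⟨_, hA i⟩) _ (Y.smul_mem _ hy) hw'
    have := h i₀
    rw [residue_eq_zero_iff] at this
    apply (mem_maximalIdeal _).1 this
    have : (⟨(c i₀)⁻¹ * c i₀, hA i₀⟩ : A) = 1 := by ext; simp [h0]
    rw [this]; exact isUnit_one
  have hli : ∀ (c : Fin g → K), ∑ i, c i • phiA A lam (s i) ∈ Y → c = 0 := by
    intro c hc
    by_contra hne
    obtain ⟨i, hi⟩ := Function.ne_iff.1 hne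
    have := hkey (fun j => (c i)⁻¹ * c j) (-((c i)⁻¹ • ∑ i, c i • phiA A lam (s i)))
      (Y.neg_mem (Y.smul_mem _ hc)) (by
        have : (-((c i)⁻¹ • ∑ i, c i • phiA A lam (s i))) + ∑ j, ((c i)⁻¹ * c j) • phiA A lam (s j) = 0 := by
          simp [Finset.smul_sum, mul_smul]
        rw [this]; exact W.zero_mem) i
    simp only [inv_mul_cancel₀ (show c i ≠ 0 from hi), map_one, lt_self_iff_false] at this
  have hlin : LinearIndependent K (fun i => phiA A lam (s i)) := by
    rw [Fintype.linearIndependent_iff]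
    intro c hc
    have := hli c (by rw [hc]; exact Y.zero_mem)
    intro i; rw [this]; rfl
  let U := Submodule.span K (Set.range fun i => phiA A lam (s i))
  have hdisj : Disjoint Y U := by
    rw [Submodule.disjoint_def]
    intro x hx hxU
    obtain ⟨c, rfl⟩ := (Submodule.mem_span_range_iff_exists_fun K).1 hxU
    rw [hli c hx]; simp
  have hU : Module.finrank K U = g := by
    have := finrank_span_eq_card hlin
    simpa using this
  refine ⟨Y ⊔ U, ?_, ?_⟩
  · intro y hy hyW
    obtain ⟨y1, hy1, y2, hy2, rfl⟩ := Submodule.mem_sup.1 hy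
    obtain ⟨c, rfl⟩ := (Submodule.mem_span_range_iff_exists_fun K).1 hy2
    have hv := hkey c y1 hy1 hyW
    have hcA : ∀ i, c i ∈ A := fun i => (A.valuation_le_one_iff _).1 (hv i).le
    obtain ⟨p, hpN, hp0, hpy, hm, hr⟩ := hkey0 (fun i => ⟨c i, hcA i⟩) y1 hy1 hyW
    refine ⟨_, hm, ?_, ?_⟩
    · rw [map_add, hp0, zero_add, map_sum]
      simp only [map_smulₛₗ, hr, zero_smul, Finset.sum_const_zero]
    · rw [map_add, hpy, map_sum]
      simp only [map_smul]; rfl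
  · have := Submodule.finrank_sup_add_finrank_inf_eq Y U
    rw [hdisj.eq_bot, finrank_bot, hU] at this
    omega

theorem arith_step (n1 n2 u1 u2 f1 f2 u f f' : ℕ) (h1 : n1 ≤ u1 * 2 ^ f1) (h2 : n2 ≤ u2 * 2 ^ f2)
    (hf1 : f1 ≤ f') (hf2 : f2 ≤ f') (hu : 1 ≤ u) (hle : u ≤ u1 + u2) (h : f + u = f' + (u1 + u2)) :
    n1 + n2 ≤ u * 2 ^ f := by
  obtain ⟨g, hg⟩ := Nat.exists_eq_add_of_le hle
  have hfg : f = f' + g := by omega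
  have a1 : n1 ≤ u1 * 2 ^ f' := h1.trans (Nat.mul_le_mul_left _ (Nat.pow_le_pow_right (by norm_num) hf1))
  have a2 : n2 ≤ u2 * 2 ^ f' := h2.trans (Nat.mul_le_mul_left _ (Nat.pow_le_pow_right (by norm_num) hf2))
  have hg2 : 1 + g ≤ 2 ^ g := by have := @Nat.lt_two_pow_self g; omega
  calc n1 + n2 ≤ (u1 + u2) * 2 ^ f' := by rw [add_mul]; omega
    _ = (u + g) * 2 ^ f' := by rw [hg]
    _ ≤ (u * 2 ^ g) * 2 ^ f' := by
        apply Nat.mul_le_mul_right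
        nlinarith
    _ = u * 2 ^ f := by rw [hfg, pow_add]; ring

theorem Cl_node (lam : ι → V) (M1 M2 : Submodule A (ι → A)) (S1 S2 : Set ι) (hS : Disjoint S1 S2)
    (hs1 : ∀ s ∈ M1, ∀ i ∉ S1, s i = 0) (hs2 : ∀ s ∈ M2, ∀ i ∉ S2, s i = 0)
    (W W' : Submodule A V) (hW : W ≤ W')
    (h1W : ∀ s ∈ M1, phiA A lam s ∈ W') (h2W : ∀ s ∈ M2, phiA A lam s ∈ W')
    (M : Submodule A (ι → A)) (hM : ∀ s, s ∈ M ↔ s ∈ M1 ⊔ M2 ∧ phiA A lam s ∈ W)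
    (n1 n2 : ℕ) (h1 : Cl A lam M1 W' n1) (h2 : Cl A lam M2 W' n2)
    (hne : ∃ s ∈ M, rho A s ≠ 0) : Cl A lam M W (n1 + n2) := by
  obtain ⟨Y1, hY1, hn1⟩ := h1
  obtain ⟨Y2, hY2, hn2⟩ := h2
  have hNW : ∀ s ∈ M1 ⊔ M2, phiA A lam s ∈ W' := by
    intro s hs
    obtain ⟨a, ha, b, hb, rfl⟩ := Submodule.mem_sup.1 hs
    rw [map_add]; exact W'.add_mem (h1W a ha) (h2W b hb)
  have hRN : Module.finrank (ResidueField A) (RR A (M1 ⊔ M2)) =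
      Module.finrank (ResidueField A) (RR A M1) + Module.finrank (ResidueField A) (RR A M2) := by
    have hsup : RR A (M1 ⊔ M2) = RR A M1 ⊔ RR A M2 := Submodule.map_sup _ _ _
    have hd : Disjoint (RR A M1) (RR A M2) := by
      rw [Submodule.disjoint_def]
      rintro x ⟨a, ha, rfl⟩ ⟨b, hb, hab⟩
      ext i
      by_cases hi : i ∈ S1
      · have hi2 : i ∉ S2 := fun h => Set.disjoint_left.1 hS hi h
        rw [← hab]; simp [rho, hs2 b hb i hi2]
      · simp [rho, hs1 a ha i hi]
    have := Submodule.finrank_sup_add_finrank_inf_eq (RR A M1) (RR A M2)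
    rw [hd.eq_bot, finrank_bot] at this
    rw [hsup]; omega
  have hu : 1 ≤ Module.finrank (ResidueField A) (RR A M) := by
    obtain ⟨s, hs, hs0⟩ := hne
    rw [Nat.one_le_iff_ne_zero]
    intro h0
    rw [Submodule.finrank_eq_zero] at h0
    have := Submodule.mem_map_of_mem (f := rho A) hs
    change _ ∈ RR A M at this
    rw [h0] at this
    exact hs0 (by simpa using this)
  have hle : Module.finrank (ResidueField A) (RR A M) ≤ Module.finrank (ResidueField A) (RR A (M1 ⊔ M2)) :=
    Submodule.finrank_mono (Submodule.map_mono (fun s hs => ((hM s).1 hs).1))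
  rcases le_total (Module.finrank K Y2) (Module.finrank K Y1) with hf | hf
  · obtain ⟨Y, hY, hdim⟩ := step_core A lam (M1 ⊔ M2) W W' hW hNW M hM Y1 (fun y hy hw => by
      obtain ⟨s, hs, h⟩ := hY1 y hy hw
      exact ⟨s, Submodule.mem_sup_left hs, h⟩)
    rw [hRN] at hdim hle
    exact ⟨Y, hY, arith_step _ _ _ _ _ _ _ _ _ hn1 hn2 le_rfl hf hu hle hdim⟩
  · obtain ⟨Y, hY, hdim⟩ := step_core A lam (M1 ⊔ M2) W W' hW hNW M hM Y2 (fun y hy hw => by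
      obtain ⟨s, hs, h⟩ := hY2 y hy hw
      exact ⟨s, Submodule.mem_sup_right hs, h⟩)
    rw [hRN] at hdim hle
    exact ⟨Y, hY, arith_step _ _ _ _ _ _ _ _ _ hn1 hn2 hf le_rfl hu hle hdim⟩

end Count
end WFP

namespace WFP
open IsLocalRing

/-- Binary trees with labelled leaves. -/
inductive T (ι : Type) : Type
  | leaf : ι → T ι
  | node : T ι → T ι → T ι

namespace T
variable {ι : Type}
def base : T ι → ι
  | leaf i => i
  | node l _ => base l
def leaves : T ι → Finset ι
  | leaf i => {i}
  | node l r => leaves l ∪ leaves r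
def Nodup : T ι → Prop
  | leaf _ => True
  | node l r => Nodup l ∧ Nodup r ∧ Disjoint (leaves l) (leaves r)
def depth : T ι → ℕ
  | leaf _ => 0
  | node l r => max (depth l) (depth r) + 1
def tsum {V : Type*} [AddCommGroup V] (lam : ι → V) : T ι → V
  | leaf i => lam i
  | node l r => tsum lam l + tsum lam r

theorem base_mem : ∀ τ : T ι, base τ ∈ leaves τ
  | leaf i => by simp [base, leaves]
  | node l r => by simp [base, leaves, base_mem l]

theorem tsum_eq {V : Type*} [AddCommGroup V] (lam : ι → V) : ∀ τ : T ι, Nodup τ →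
    tsum lam τ = ∑ i ∈ leaves τ, lam i
  | leaf i, _ => by simp [tsum, leaves]
  | node l r, h => by
    rw [tsum, leaves, Finset.sum_union h.2.2, tsum_eq lam l h.1, tsum_eq lam r h.2.1]

theorem finite_depth [Finite ι] (k : ℕ) : {τ : T ι | depth τ ≤ k}.Finite := by
  induction k with
  | zero =>
    apply (Set.finite_range (leaf : ι → T ι)).subset
    intro τ hτ
    cases τ with
    | leaf i => exact ⟨i, rfl⟩
    | node l r => simp [depth] at hτ
  | succ k ih =>
    apply ((Set.finite_range (leaf : ι → T ι)).union (Set.Finite.image2 node ih ih)).subset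
    intro τ hτ
    cases τ with
    | leaf i => exact Or.inl ⟨i, rfl⟩
    | node l r =>
      simp only [depth, Set.mem_ofPred_eq, Nat.add_le_add_iff_right, sup_le_iff] at hτ
      exact Or.inr ⟨l, hτ.1, r, hτ.2, rfl⟩
end T
open T

section Dec
variable {K : Type*} [Field K] (A : ValuationSubring K) {ι : Type} [Fintype ι]
  {V : Type*} [AddCommGroup V] [Module K V]

def phiK (lam : ι → V) : (ι → K) →ₗ[A] V where
  toFun s := ∑ i, (s i) • lam i
  map_add' s t := by simp [add_smul, Finset.sum_add_distrib]
  map_smul' c s := by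
    simp only [Pi.smul_apply, smul_assoc, Finset.smul_sum, RingHom.id_apply]

variable (lam : ι → V) (W : ι → ι → Submodule A V)

def leafS (i : ι) : Submodule A (ι → K) where
  carrier := {t | ∀ j, j ≠ i → t j = 0}
  add_mem' := by intro a b ha hb j hj; simp [ha j hj, hb j hj]
  zero_mem' := by intro j _; rfl
  smul_mem' := by intro c a ha j hj; simp [ha j hj]

def MM : T ι → Submodule A V → Submodule A (ι → K)
  | leaf i, Wo => leafS A i ⊓ Wo.comap (phiK A lam)
  | node l r, Wo => (MM l (W l.base r.base) ⊔ MM r (W l.base r.base)) ⊓ Wo.comap (phiK A lam)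

def Nst : T ι → Submodule A V → Prop
  | leaf _, _ => True
  | node l r, Wo => Wo ≤ W l.base r.base ∧ Nst l (W l.base r.base) ∧ Nst r (W l.base r.base)

theorem MM_phi (τ : T ι) (Wo : Submodule A V) (t : ι → K) (h : t ∈ MM A lam W τ Wo) :
    phiK A lam t ∈ Wo := by
  cases τ <;> exact h.2

theorem MM_supp : ∀ (τ : T ι) (Wo : Submodule A V) (t : ι → K), t ∈ MM A lam W τ Wo →
    ∀ i ∉ leaves τ, t i = 0
  | leaf j, Wo, t, h, i, hi => h.1 i (by simpa [leaves] using hi)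
  | node l r, Wo, t, h, i, hi => by
    obtain ⟨a, ha, b, hb, rfl⟩ := Submodule.mem_sup.1 h.1
    simp only [leaves, Finset.mem_union, not_or] at hi
    simp [MM_supp l _ a ha i hi.1, MM_supp r _ b hb i hi.2]

def restr (S : Finset ι) (t : ι → K) : ι → K := fun i => if i ∈ S then t i else 0

/-- splitting an element of a node into its two restrictions -/
theorem MM_split (l r : T ι) (hd : Disjoint (leaves l) (leaves r)) (Wo : Submodule A V) (t : ι → K)
    (h : t ∈ MM A lam W (node l r) Wo) :
    restr l.leaves t ∈ MM A lam W l (W l.base r.base) ∧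
    restr r.leaves t ∈ MM A lam W r (W l.base r.base) := by
  obtain ⟨a, ha, b, hb, rfl⟩ := Submodule.mem_sup.1 h.1
  have h1 : restr l.leaves (a + b) = a := by
    ext i; unfold restr
    split_ifs with hi
    · simp [MM_supp A lam W r _ b hb i (Finset.disjoint_left.1 hd hi)]
    · exact (MM_supp A lam W l _ a ha i hi).symm
  have h2 : restr r.leaves (a + b) = b := by
    ext i; unfold restr
    split_ifs with hi
    · simp [MM_supp A lam W l _ a ha i (Finset.disjoint_right.1 hd hi)]
    · exact (MM_supp A lam W r _ b hb i hi).symm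
  rw [h1, h2]; exact ⟨ha, hb⟩

/-- multipliers -/
def mulT (t : ι → K) : (ι → A) →ₗ[A] (ι → K) where
  toFun s := fun i => (s i : K) * t i
  map_add' s t := by ext; simp [add_mul]
  map_smul' c s := by ext i; simp [mul_assoc, Algebra.smul_def]

def suppS (t : ι → K) : Submodule A (ι → A) where
  carrier := {s | ∀ j, t j = 0 → s j = 0}
  add_mem' := by intro a b ha hb j hj; simp [ha j hj, hb j hj]
  zero_mem' := by intro j _; rfl
  smul_mem' := by intro c a ha j hj; simp [ha j hj]

def Mt (t : ι → K) (τ : T ι) (Wo : Submodule A V) : Submodule A (ι → A) :=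
  suppS A t ⊓ (MM A lam W τ Wo).comap (mulT A t)

theorem phi_eq (t : ι → K) (s : ι → A) :
    phiK A lam (mulT A t s) = phiA A (fun i => t i • lam i) s := by
  simp only [phiK, mulT, phiA, LinearMap.coe_mk, AddHom.coe_mk, mul_smul]
  rfl

theorem Mt_supp (t : ι → K) (τ : T ι) (Wo : Submodule A V) (s : ι → A) (hs : s ∈ Mt A lam W t τ Wo)
    (i : ι) (hi : i ∉ leaves τ) : s i = 0 := by
  by_cases ht : t i = 0
  · exact hs.1 i ht
  · have := MM_supp A lam W τ Wo _ hs.2 i hi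
    simp only [mulT, LinearMap.coe_mk, AddHom.coe_mk, mul_eq_zero, ht, or_false] at this
    exact Subtype.ext this

theorem Mt_node (t : ι → K) (l r : T ι) (hd : Disjoint (leaves l) (leaves r)) (Wo : Submodule A V)
    (s : ι → A) : s ∈ Mt A lam W t (node l r) Wo ↔
      s ∈ Mt A lam W t l (W l.base r.base) ⊔ Mt A lam W t r (W l.base r.base) ∧
      phiA A (fun i => t i • lam i) s ∈ Wo := by
  constructor
  · intro hs
    refine ⟨?_, ?_⟩
    · obtain ⟨h1, h2⟩ := MM_split A lam W l r hd Wo _ hs.2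
      let s1 : ι → A := fun i => if i ∈ l.leaves then s i else 0
      let s2 : ι → A := fun i => if i ∈ r.leaves then s i else 0
      have e : s = s1 + s2 := by
        ext i
        simp only [Pi.add_apply, s1, s2]
        by_cases hi : i ∈ l.leaves
        · simp [hi, Finset.disjoint_left.1 hd hi]
        · by_cases hi' : i ∈ r.leaves
          · simp [hi, hi']
          · have := Mt_supp A lam W t (node l r) Wo s hs i (by simp [leaves, hi, hi'])
            simp [hi, hi', this]
      rw [e]
      refine Submodule.add_mem_sup ⟨?_, ?_⟩ ⟨?_, ?_⟩
      · intro j hj; simp only [s1]; rw [hs.1 j hj]; simp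
      · show mulT A t s1 ∈ MM A lam W l (W l.base r.base)
        convert h1 using 1
        ext i; simp only [mulT, restr, s1, LinearMap.coe_mk, AddHom.coe_mk]; split_ifs <;> simp
      · intro j hj; simp only [s2]; rw [hs.1 j hj]; simp
      · show mulT A t s2 ∈ MM A lam W r (W l.base r.base)
        convert h2 using 1
        ext i; simp only [mulT, restr, s2, LinearMap.coe_mk, AddHom.coe_mk]; split_ifs <;> simp
    · rw [← phi_eq]; exact MM_phi A lam W (node l r) Wo _ hs.2
  · rintro ⟨hs, hp⟩
    obtain ⟨a, ha, b, hb, rfl⟩ := Submodule.mem_sup.1 hs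
    refine ⟨(suppS A t).add_mem ha.1 hb.1, ?_, ?_⟩
    · show mulT A t (a + b) ∈ _
      rw [map_add]; exact Submodule.add_mem_sup ha.2 hb.2
    · show phiK A lam (mulT A t (a + b)) ∈ Wo
      rw [phi_eq]; exact hp

theorem one_mem_Mt (t : ι → K) (τ : T ι) (Wo : Submodule A V)
    (h : restr τ.leaves t ∈ MM A lam W τ Wo) :
    (fun i => if i ∈ τ.leaves ∧ t i ≠ 0 then 1 else 0 : ι → A) ∈ Mt A lam W t τ Wo := by
  refine ⟨?_, ?_⟩
  · intro j hj; simp [hj]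
  · show mulT A t _ ∈ MM A lam W τ Wo
    convert h using 1
    ext i; simp only [mulT, restr, LinearMap.coe_mk, AddHom.coe_mk]
    by_cases h1 : i ∈ τ.leaves <;> by_cases h2 : t i = 0 <;> simp [h1, h2]

variable [FiniteDimensional K V]

theorem Cl_zero (lam : ι → V) (M : Submodule A (ι → A)) (W : Submodule A V) : Cl A lam M W 0 :=
  ⟨⊥, fun y hy _ => ⟨0, M.zero_mem, by simp, by simp [(Submodule.mem_bot K).1 hy]⟩, by simp⟩

theorem count_tree (t : ι → K) : ∀ (τ : T ι) (Wo : Submodule A V), τ.Nodup → Nst A W τ Wo →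
    restr τ.leaves t ∈ MM A lam W τ Wo →
    Cl A (fun i => t i • lam i) (Mt A lam W t τ Wo) Wo (τ.leaves.filter (fun i => t i ≠ 0)).card := by
  intro τ
  induction τ with
  | leaf i =>
    intro Wo _ _ h
    have h1 := one_mem_Mt A lam W t _ _ h
    by_cases hi : t i = 0
    · simp only [leaves, Finset.filter_singleton, hi]
      simpa using Cl_zero A _ _ _
    · refine ⟨⊥, fun y hy _ => ⟨0, Submodule.zero_mem _, by simp, by simp [(Submodule.mem_bot K).1 hy]⟩, ?_⟩
      have hcc : (Finset.filter (fun i => t i ≠ 0) (leaf i).leaves).card = 1 := by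
        rw [leaves, Finset.filter_singleton, if_pos hi, Finset.card_singleton]
      rw [hcc, finrank_bot, pow_zero, mul_one]
      rw [Nat.one_le_iff_ne_zero]
      intro h0
      rw [Submodule.finrank_eq_zero] at h0
      have := Submodule.mem_map_of_mem (f := rho A) h1
      change _ ∈ RR A _ at this
      rw [h0, Submodule.mem_bot] at this
      have := congrFun this i
      simp [rho, leaves, hi] at this
  | node l r ihl ihr =>
    intro Wo hnd hn h
    by_cases hne : ((node l r).leaves.filter (fun i => t i ≠ 0)).card = 0
    · rw [hne]; exact Cl_zero A _ _ _
    obtain ⟨i, hi⟩ := Finset.card_ne_zero.1 hne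
    obtain ⟨hl, hr⟩ := MM_split A lam W l r hnd.2.2 Wo _ h
    have e1 : restr l.leaves (restr (node l r).leaves t) = restr l.leaves t := by
      ext i; unfold restr; by_cases hi : i ∈ l.leaves <;> simp [hi, leaves]
    have e2 : restr r.leaves (restr (node l r).leaves t) = restr r.leaves t := by
      ext i; unfold restr; by_cases hi : i ∈ r.leaves <;> simp [hi, leaves]
    rw [e1] at hl; rw [e2] at hr
    have c1 := ihl _ hnd.1 hn.2.1 hl
    have c2 := ihr _ hnd.2.1 hn.2.2 hr
    have key := Cl_node A (fun i => t i • lam i) _ _ (l.leaves : Set ι) (r.leaves : Set ι)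
      (by exact_mod_cast hnd.2.2)
      (fun s hs i hi => Mt_supp A lam W t l _ s hs i (by simpa using hi))
      (fun s hs i hi => Mt_supp A lam W t r _ s hs i (by simpa using hi)) Wo (W l.base r.base) hn.1
      (fun s hs => by rw [← phi_eq]; exact MM_phi A lam W _ _ _ hs.2)
      (fun s hs => by rw [← phi_eq]; exact MM_phi A lam W _ _ _ hs.2)
      (Mt A lam W t (node l r) Wo) (Mt_node A lam W t l r hnd.2.2 Wo) _ _ c1 c2
      ⟨_, one_mem_Mt A lam W t _ _ h, fun h0 => by
        have := congrFun h0 i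
        simp only [Finset.mem_filter] at hi
        simp [rho, hi] at this⟩
    rw [leaves, Finset.filter_union, Finset.card_union_of_disjoint]
    · exact key
    · exact Finset.disjoint_filter_filter hnd.2.2

end Dec

section Ord
variable {K : Type*} [Field K] [LinearOrder K] [IsStrictOrderedRing K] (A : ValuationSubring K)
  {ι : Type} [Fintype ι]
  {V : Type*} [AddCommGroup V] [Module K V] [FiniteDimensional K V]
  (lam : ι → V) (W : ι → ι → Submodule A V)

theorem split_step (hA : ∀ x y : K, |x| ≤ |y| → y ∈ A → x ∈ A) (τ : T ι) (hnd : τ.Nodup) (hl : ∀ i, i ∈ τ.leaves)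
    (hn : Nst A W τ ⊥) (t : ι → K) (ht : t ∈ MM A lam W τ ⊥)
    (hcard : 2 ^ Module.finrank K V < (Finset.univ.filter (fun i => t i ≠ 0)).card) :
    ∃ s : ι → K, (∀ i, 0 ≤ s i ∧ s i ≤ 1) ∧ (fun i => s i * t i) ∈ MM A lam W τ ⊥ ∧
      (∃ i, t i ≠ 0 ∧ s i = 0) ∧ (∃ i, t i ≠ 0 ∧ s i = 1) := by
  have hleaves : τ.leaves = Finset.univ := by ext i; simp [hl i]
  have hres : restr τ.leaves t = t := by ext i; simp [restr, hl]
  obtain ⟨Y, -, hc⟩ := count_tree A lam W t τ ⊥ hnd hn (by rw [hres]; exact ht)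
  rw [hleaves] at hc
  have hc : (Finset.univ.filter (fun i => t i ≠ 0)).card ≤
      Module.finrank (ResidueField A) (RR A (Mt A lam W t τ ⊥)) * 2 ^ Module.finrank K Y := by
    convert hc
  have hY : Module.finrank K Y ≤ Module.finrank K V := Submodule.finrank_le Y
  set u := Module.finrank (ResidueField A) (RR A (Mt A lam W t τ ⊥)) with hu
  have hu2 : 1 < u := by
    by_contra hcon
    have h1 : u * 2 ^ Module.finrank K Y ≤ 1 * 2 ^ Module.finrank K V :=
      Nat.mul_le_mul (by omega) (Nat.pow_le_pow_right (by norm_num) hY)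
    omega
  set one : ι → A := (fun i => if i ∈ τ.leaves ∧ t i ≠ 0 then 1 else 0 : ι → A) with hone_def
  have hone : one ∈ Mt A lam W t τ ⊥ := by
    convert one_mem_Mt A lam W t τ ⊥ (by rw [hres]; exact ht)
  -- an element not congruent to a multiple of one
  have hex : ∃ s ∈ Mt A lam W t τ ⊥, ∀ c : A, rho A s ≠ residue A c • rho A one := by
    by_contra hcon
    push Not at hcon
    have hle : RR A (Mt A lam W t τ ⊥) ≤ Submodule.span (ResidueField A) {rho A one} := by
      rintro x ⟨s, hs, rfl⟩
      obtain ⟨c, hc⟩ := hcon s hs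
      rw [hc]; exact Submodule.smul_mem _ _ (Submodule.mem_span_singleton_self _)
    have h1 := Submodule.finrank_mono hle
    have h2 := finrank_span_le_card (R := ResidueField A) ({rho A one} : Set (ι → ResidueField A))
    simp at h2
    omega
  obtain ⟨s, hs, hsc⟩ := hex
  have hXne : (Finset.univ.filter (fun i => t i ≠ 0)).Nonempty := Finset.card_pos.1 (lt_of_le_of_lt (Nat.zero_le _) hcard)
  obtain ⟨i0, hi0, hmax⟩ := Finset.exists_max_image _ (fun i => (s i : K)) hXne
  obtain ⟨i1, hi1, hmin⟩ := Finset.exists_min_image _ (fun i => (s i : K)) hXne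
  simp only [Finset.mem_filter, Finset.mem_univ, true_and] at hi0 hi1 hmax hmin
  set c : A := s i0 - s i1 with hcdef
  have hcK : (c : K) = s i0 - s i1 := by simp [hcdef]
  have hcu : IsUnit c := by
    by_contra hcu
    have hcm : c ∈ maximalIdeal A := (mem_maximalIdeal c).2 hcu
    apply hsc (s i1)
    ext i
    simp only [rho, LinearMap.coe_mk, AddHom.coe_mk, Pi.smul_apply, smul_eq_mul, hone_def]
    by_cases hti : t i = 0
    · have : s i = 0 := hs.1 i hti
      simp [hti, this]
    · simp only [hl, hti, ne_eq, not_false_eq_true, and_self, if_true, map_one, mul_one]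
      rw [← sub_eq_zero, ← map_sub, residue_eq_zero_iff]
      by_cases hc0 : (c : K) = 0
      · have : s i - s i1 = 0 := by
          ext; push_cast
          have := hmax i hti; have := hmin i hti
          linarith [hcK]
        rw [this]; exact Ideal.zero_mem _
      · have hcpos : (0:K) < c := lt_of_le_of_ne (by rw [hcK]; linarith [hmax i1 hi1]) (Ne.symm hc0)
        have hq : ((s i : K) - s i1) / c ∈ A := by
          apply hA _ 1 _ A.one_mem
          have := hmax i hti; have := hmin i hti
          rw [abs_one, abs_of_nonneg (div_nonneg (by linarith) hcpos.le), div_le_one hcpos]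
          linarith
        have : s i - s i1 = (⟨_, hq⟩ : A) * c := by
          ext; push_cast; field_simp
        rw [this]; exact Ideal.mul_mem_left _ _ hcm
  obtain ⟨c', hc'⟩ := hcu.exists_left_inv
  have hc'K : (c' : K) * c = 1 := by exact_mod_cast congrArg Subtype.val hc'
  have hc0 : (c : K) ≠ 0 := right_ne_zero_of_mul_eq_one hc'K
  have hcpos : (0:K) < c := lt_of_le_of_ne (by rw [hcK]; linarith [hmax i1 hi1]) (Ne.symm hc0)
  have hc'eq : (c' : K) = (c : K)⁻¹ := eq_inv_of_mul_eq_one_left hc'K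
  let s2 : ι → A := c' • (s - s i1 • one)
  have hs2 : s2 ∈ Mt A lam W t τ ⊥ :=
    Submodule.smul_mem _ _ (Submodule.sub_mem _ hs (Submodule.smul_mem _ _ hone))
  have hval : ∀ i, t i ≠ 0 → (s2 i : K) = ((s i : K) - s i1) / c := by
    intro i hi
    simp [s2, hone_def, hl, hi, hc'eq]
    field_simp
  have hval0 : ∀ i, t i = 0 → (s2 i : K) = 0 := by
    intro i hi
    rw [hs2.1 i hi]; rfl
  refine ⟨fun i => (s2 i : K), ?_, hs2.2, ⟨i1, hi1, ?_⟩, ⟨i0, hi0, ?_⟩⟩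
  · intro i
    by_cases hti : t i = 0
    · show 0 ≤ (s2 i : K) ∧ (s2 i : K) ≤ 1
      rw [hval0 i hti]; simp
    · show 0 ≤ (s2 i : K) ∧ (s2 i : K) ≤ 1
      rw [hval i hti]
      have := hmax i hti; have := hmin i hti
      exact ⟨div_nonneg (by linarith) hcpos.le, by rw [div_le_one hcpos]; linarith⟩
  · show (s2 i1 : K) = 0
    rw [hval i1 hi1]; simp
  · show (s2 i0 : K) = 1
    rw [hval i0 hi0, ← hcK, div_self hc0]

theorem decomp (hA : ∀ x y : K, |x| ≤ |y| → y ∈ A → x ∈ A) (τ : T ι) (hnd : τ.Nodup) (hl : ∀ i, i ∈ τ.leaves)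
    (hn : Nst A W τ ⊥) : ∀ (k : ℕ) (t : ι → K), (Finset.univ.filter (fun i => t i ≠ 0)).card = k →
      (∀ i, 0 ≤ t i) → t ∈ MM A lam W τ ⊥ →
    ∃ tt : Finset ι → ι → K, (∀ B i, 0 ≤ tt B i) ∧ (∀ B i, i ∉ B → tt B i = 0) ∧
      (∀ B, 2 ^ Module.finrank K V < B.card → ∀ i, tt B i = 0) ∧ (∀ i, ∑ B, tt B i = t i) ∧
      ∀ B, tt B ∈ MM A lam W τ ⊥ := by
  intro k
  induction k using Nat.strong_induction_on with
  | _ k ih =>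
  intro t hk ht0 ht
  by_cases hcard : 2 ^ Module.finrank K V < (Finset.univ.filter (fun i => t i ≠ 0)).card
  · obtain ⟨s, hs01, hs, ⟨i1, hi1, hs1⟩, ⟨i0, hi0, hs0⟩⟩ := split_step A lam W hA τ hnd hl hn t ht hcard
    have hs' : (fun i => (1 - s i) * t i) ∈ MM A lam W τ ⊥ := by
      have := Submodule.sub_mem _ ht hs
      convert this using 1
      ext i; simp; ring
    obtain ⟨p, p1, p2, p3, p4, p5⟩ := ih _ (by
        rw [← hk]
        apply Finset.card_lt_card
        rw [Finset.ssubset_iff_of_subset]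
        · exact ⟨i1, by simp [hi1], by simp [hs1]⟩
        · intro i; simp only [Finset.mem_filter, Finset.mem_univ, true_and]
          exact fun h h' => h (by rw [h', mul_zero])) (fun i => s i * t i) rfl
        (fun i => mul_nonneg (hs01 i).1 (ht0 i)) hs
    obtain ⟨q, q1, q2, q3, q4, q5⟩ := ih _ (by
        rw [← hk]
        apply Finset.card_lt_card
        rw [Finset.ssubset_iff_of_subset]
        · exact ⟨i0, by simp [hi0], by simp [hs0]⟩
        · intro i; simp only [Finset.mem_filter, Finset.mem_univ, true_and]
          exact fun h h' => h (by rw [h', mul_zero])) (fun i => (1 - s i) * t i) rfl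
        (fun i => mul_nonneg (by linarith [(hs01 i).2]) (ht0 i)) hs'
    refine ⟨fun B => p B + q B, fun B i => add_nonneg (p1 B i) (q1 B i), fun B i hi => by simp [p2 B i hi, q2 B i hi],
      fun B hB i => by simp [p3 B hB i, q3 B hB i], fun i => ?_, fun B => Submodule.add_mem _ (p5 B) (q5 B)⟩
    simp only [Pi.add_apply, Finset.sum_add_distrib, p4, q4]; ring
  · set X := Finset.univ.filter (fun i => t i ≠ 0) with hX
    refine ⟨fun B => if B = X then t else 0, ?_, ?_, ?_, ?_, ?_⟩
    · intro B i; dsimp only; split_ifs; exacts [ht0 i, le_rfl]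
    · intro B i hi; dsimp only; split_ifs with h
      · subst h; simpa [hX] using hi
      · rfl
    · intro B hB i; dsimp only; split_ifs with h
      · subst h; exact absurd hB hcard
      · rfl
    · intro i
      rw [Finset.sum_eq_single X]
      · simp
      · intro B _ hB; simp [hB]
      · simp
    · intro B; dsimp only; split_ifs; exacts [ht, Submodule.zero_mem _]
end Ord
end WFP

namespace WFP
open IsLocalRing T

/-- a property of all nodes of a tree -/
def NodeP {ι : Type} (p : ι → ι → Finset ι → Prop) : T ι → Prop
  | leaf _ => True
  | node l r => NodeP p l ∧ NodeP p r ∧ p l.base r.base r.leaves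

def Ch {ι : Type} (q : ι → ι → ι → ι → Prop) : T ι → ι → ι → Prop
  | leaf _, _, _ => True
  | node l r, x, y => q x y l.base r.base ∧ Ch q l l.base r.base ∧ Ch q r l.base r.base

/-- a property of all parent-child pairs of nodes -/
def Nes {ι : Type} (q : ι → ι → ι → ι → Prop) : T ι → Prop
  | leaf _ => True
  | node l r => Ch q l l.base r.base ∧ Ch q r l.base r.base

theorem NodeP.mono {ι : Type} {p p' : ι → ι → Finset ι → Prop} (h : ∀ x y R, p x y R → p' x y R) :
    ∀ τ : T ι, NodeP p τ → NodeP p' τ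
  | leaf _, _ => trivial
  | node l r, hh => ⟨NodeP.mono h l hh.1, NodeP.mono h r hh.2.1, h _ _ _ hh.2.2⟩

theorem Ch.mono {ι : Type} {q q' : ι → ι → ι → ι → Prop}
    (h : ∀ x y z w, q x y z w → q' x y z w) :
    ∀ (τ : T ι) (x y : ι), Ch q τ x y → Ch q' τ x y
  | leaf _, _, _, _ => trivial
  | node l r, _, _, hh => ⟨h _ _ _ _ hh.1, Ch.mono h l _ _ hh.2.1, Ch.mono h r _ _ hh.2.2⟩

theorem Nes.mono {ι : Type} {q q' : ι → ι → ι → ι → Prop}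
    (h : ∀ x y z w, q x y z w → q' x y z w) :
    ∀ (τ : T ι), Nes q τ → Nes q' τ
  | leaf _, _ => trivial
  | node l r, hh => ⟨Ch.mono h l _ _ hh.1, Ch.mono h r _ _ hh.2⟩

theorem NodeP.bound {ι : Type} {p : ℝ → ι → ι → Finset ι → Prop}
    (h : ∀ c c' x y R, c ≤ c' → p c x y R → p c' x y R) :
    ∀ τ : T ι, NodeP (fun x y R => ∃ c, p c x y R) τ → ∃ c, NodeP (p c) τ
  | leaf _, _ => ⟨0, trivial⟩
  | node l r, hh => by
    obtain ⟨c1, h1⟩ := NodeP.bound h l hh.1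
    obtain ⟨c2, h2⟩ := NodeP.bound h r hh.2.1
    obtain ⟨c3, h3⟩ := hh.2.2
    refine ⟨max c1 (max c2 c3), ?_, ?_, ?_⟩
    · exact NodeP.mono (fun x y R => h _ _ x y R (le_max_left _ _)) l h1
    · exact NodeP.mono (fun x y R => h _ _ x y R ((le_max_left _ _).trans (le_max_right _ _))) r h2
    · exact h _ _ _ _ _ ((le_max_right _ _).trans (le_max_right _ _)) h3

theorem NodeP.ev {ι α : Type} {l : Filter α} {p : α → ι → ι → Finset ι → Prop} :
    ∀ τ : T ι, NodeP (fun x y R => ∀ᶠ k in l, p k x y R) τ ↔ ∀ᶠ k in l, NodeP (p k) τ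
  | leaf _ => by simp [NodeP]
  | node a b => by simp [NodeP, NodeP.ev a, NodeP.ev b]

theorem Ch.ev {ι α : Type} {l : Filter α} {p : α → ι → ι → ι → ι → Prop} :
    ∀ (τ : T ι) (x y : ι), Ch (fun x y z w => ∀ᶠ k in l, p k x y z w) τ x y ↔ ∀ᶠ k in l, Ch (p k) τ x y
  | leaf _, _, _ => by simp [Ch]
  | node a b, _, _ => by simp [Ch, Ch.ev a, Ch.ev b]

theorem Nes.ev {ι α : Type} {l : Filter α} {p : α → ι → ι → ι → ι → Prop} :
    ∀ (τ : T ι), Nes (fun x y z w => ∀ᶠ k in l, p k x y z w) τ ↔ ∀ᶠ k in l, Nes (p k) τ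
  | leaf _ => by simp [Nes]
  | node a b => by simp [Nes, Ch.ev a, Ch.ev b]

section
variable {K : Type*} [Field K] (A : ValuationSubring K) {ι : Type} [Fintype ι]
  {V : Type*} [AddCommGroup V] [Module K V] (lam : ι → V) (W : ι → ι → Submodule A V)

theorem Nst_of_Ch : ∀ (τ : T ι) (x y : ι), Ch (fun x y z w => W x y ≤ W z w) τ x y → Nst A W τ (W x y)
  | leaf _, _, _, _ => trivial
  | node l r, _, _, h => ⟨h.1, Nst_of_Ch l _ _ h.2.1, Nst_of_Ch r _ _ h.2.2⟩

theorem Nst_of_Nes : ∀ (τ : T ι), Nes (fun x y z w => W x y ≤ W z w) τ → Nst A W τ ⊥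
  | leaf _, _ => trivial
  | node l r, h => ⟨bot_le, Nst_of_Ch A W l _ _ h.1, Nst_of_Ch A W r _ _ h.2⟩

theorem restr_restr (S S' : Finset ι) (h : S ⊆ S') (t : ι → K) : restr S (restr S' t) = restr S t := by
  ext i; unfold restr
  by_cases hi : i ∈ S
  · simp [hi, h hi]
  · simp [hi]

theorem MM_nodeP (t : ι → K) : ∀ (τ : T ι) (Wo : Submodule A V), τ.Nodup →
    restr τ.leaves t ∈ MM A lam W τ Wo →
    NodeP (fun x y R => phiK A lam (restr R t) ∈ W x y) τ
  | leaf _, _, _, _ => trivial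
  | node l r, Wo, hnd, h => by
    obtain ⟨h1, h2⟩ := MM_split A lam W l r hnd.2.2 Wo _ h
    rw [restr_restr _ _ (by simp [leaves])] at h1 h2
    exact ⟨MM_nodeP t l _ hnd.1 h1, MM_nodeP t r _ hnd.2.1 h2, MM_phi A lam W _ _ _ h2⟩

theorem nodeP_MM (t : ι → K) : ∀ (τ : T ι) (Wo : Submodule A V), τ.Nodup → Nst A W τ Wo →
    phiK A lam (restr τ.leaves t) ∈ Wo →
    NodeP (fun x y R => phiK A lam (restr R t) ∈ W x y) τ →
    restr τ.leaves t ∈ MM A lam W τ Wo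
  | leaf i, Wo, _, _, h, _ => by
    refine ⟨?_, h⟩
    intro j hj; simp [restr, leaves, hj]
  | node l r, Wo, hnd, hn, h, hp => by
    have e : restr (node l r).leaves t = restr l.leaves t + restr r.leaves t := by
      ext i; simp only [restr, leaves, Pi.add_apply, Finset.mem_union]
      by_cases hi : i ∈ l.leaves
      · simp [hi, Finset.disjoint_left.1 hnd.2.2 hi]
      · simp [hi]
    have hl : phiK A lam (restr l.leaves t) ∈ W l.base r.base := by
      have h3 := Submodule.sub_mem _ (hn.1 h) hp.2.2
      rw [e, map_add, add_sub_cancel_right] at h3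
      exact h3
    refine ⟨?_, h⟩
    rw [e]
    exact Submodule.add_mem_sup (nodeP_MM t l _ hnd.1 hn.2.1 hl hp.1)
      (nodeP_MM t r _ hnd.2.1 hn.2.2 hp.2.2 hp.2.1)
end

abbrev KK : Type := (Filter.hyperfilter ℕ : Filter ℕ).Germ ℝ
def kap : (ℕ → ℝ) →+* KK := Filter.Germ.coeRingHom _

theorem kap_surj (x : KK) : ∃ f, kap f = x := by
  induction x using Filter.Germ.inductionOn with
  | _ f => exact ⟨f, rfl⟩

theorem kap_le (f g : ℕ → ℝ) : kap f ≤ kap g ↔ ∀ᶠ k in (Filter.hyperfilter ℕ : Filter ℕ), f k ≤ g k :=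
  Filter.Germ.coe_le
theorem kap_eq (f g : ℕ → ℝ) : kap f = kap g ↔ ∀ᶠ k in (Filter.hyperfilter ℕ : Filter ℕ), f k = g k :=
  Filter.Germ.coe_eq
theorem kap_abs (f : ℕ → ℝ) : |kap f| = kap (fun k => |f k|) := Filter.Germ.abs_def _

def finSub : Subring KK where
  carrier := {x | ∃ c : ℝ, |x| ≤ kap (fun _ => c)}
  zero_mem' := ⟨0, by rw [abs_zero]; exact (kap_le 0 0).2 (by simp)⟩
  one_mem' := ⟨1, by rw [abs_one]; exact (kap_le 1 1).2 (by simp)⟩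
  neg_mem' := by rintro x ⟨c, hc⟩; exact ⟨c, by rwa [abs_neg]⟩
  add_mem' := by
    rintro x y ⟨c, hc⟩ ⟨d, hd⟩
    refine ⟨c + d, (abs_add_le _ _).trans ?_⟩
    have : kap (fun _ => c + d) = kap (fun _ => c) + kap (fun _ => d) := by rw [← map_add]; rfl
    rw [this]; exact add_le_add hc hd
  mul_mem' := by
    rintro x y ⟨c, hc⟩ ⟨d, hd⟩
    refine ⟨c * d, ?_⟩
    have : kap (fun _ => c * d) = kap (fun _ => c) * kap (fun _ => d) := by rw [← map_mul]; rfl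
    rw [this, abs_mul]
    exact mul_le_mul hc hd (abs_nonneg _) ((abs_nonneg _).trans hc)

def AA : ValuationSubring KK := ValuationSubring.ofSubring finSub (by
  intro x
  rcases le_total |x| 1 with h | h
  · exact Or.inl ⟨1, h⟩
  · refine Or.inr ⟨1, ?_⟩
    rw [abs_inv]
    exact inv_le_one_of_one_le₀ h)

theorem mem_AA (x : KK) : x ∈ AA ↔ ∃ c : ℝ, |x| ≤ kap (fun _ => c) := Iff.rfl

theorem AA_conv (x y : KK) (h : |x| ≤ |y|) (hy : y ∈ AA) : x ∈ AA := by
  obtain ⟨c, hc⟩ := hy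
  exact ⟨c, h.trans hc⟩

section
variable {ι J : Type} [Fintype ι] [Fintype J]

def WW (b : ι → ι → J → J → KK) (x y : ι) : Submodule AA (J → KK) where
  carrier := {φ | ∀ j, ∑ a, φ a * b x y j a ∈ AA}
  add_mem' := by
    intro φ ψ h1 h2 j
    simp only [Pi.add_apply, add_mul, Finset.sum_add_distrib]
    exact AA.add_mem _ _ (h1 j) (h2 j)
  zero_mem' := by intro j; simp
  smul_mem' := by
    intro c φ h j
    have : ∑ a, (c • φ) a * b x y j a = (c : KK) * ∑ a, φ a * b x y j a := by
      rw [Finset.mul_sum]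
      exact Finset.sum_congr rfl fun a _ => mul_assoc _ _ _
    rw [this]
    exact AA.mul_mem _ _ c.2 (h j)

def nestR (L : ℝ) (b : ι → ι → J → J → ℝ) (x y z w : ι) : Prop :=
  ∀ (φ : J → ℝ) (j : J), |∑ a, φ a * b z w j a| ≤ L * ∑ i, |∑ a, φ a * b x y i a|

def dcR (C : ℝ) (b : ι → ι → J → J → ℝ) (lam : ι → J → ℝ) (x y : ι) (R : Finset ι) : Prop :=
  ∀ j, |∑ a, (∑ z ∈ R, lam z a) * b x y j a| ≤ C

theorem dec_real (τ : T ι) (hnd : τ.Nodup) (hl : ∀ i, i ∈ τ.leaves) (L : ℝ) :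
    ∃ C : ℝ, ∀ (b : ι → ι → J → J → ℝ) (lam : ι → J → ℝ), Nes (nestR L b) τ →
      (∀ a, ∑ x, lam x a = 0) → NodeP (dcR 1 b lam) τ →
      ∃ t : Finset ι → ι → ℝ, (∀ B x, 0 ≤ t B x) ∧ (∀ B x, x ∉ B → t B x = 0) ∧
        (∀ B, 2 ^ Fintype.card J < B.card → ∀ x, t B x = 0) ∧ (∀ x, ∑ B, t B x = 1) ∧
        ∀ B, (∀ a, ∑ x, t B x * lam x a = 0) ∧ NodeP (dcR C b (fun x a => t B x * lam x a)) τ := by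
  by_contra hcon
  push Not at hcon
  choose b lam hnest hsum hdc hno using fun k : ℕ => hcon (k : ℝ)
  let bK : ι → ι → J → J → KK := fun x y j a => kap (fun k => b k x y j a)
  let lamK : ι → J → KK := fun x a => kap (fun k => lam k x a)
  -- pairing formula
  have pair : ∀ (φ : J → ℕ → ℝ) (x y : ι) (j : J), ∑ a, kap (φ a) * bK x y j a =
      kap (fun k => ∑ a, φ a k * b k x y j a) := by
    intro φ x y j
    simp only [bK, ← map_mul, ← map_sum]
    congr 1; ext k; simp
  have hN : Nst AA (WW bK) τ ⊥ := by
    apply Nst_of_Nes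
    have h1 := (Nes.ev (l := (Filter.hyperfilter ℕ : Filter ℕ)) (p := fun k => nestR L (b k)) τ).2
      (Filter.Eventually.of_forall hnest)
    refine Nes.mono ?_ τ h1
    intro x y z w h φ hφ j
    choose f hf using fun a => kap_surj (φ a)
    obtain rfl : (fun a => kap (f a)) = φ := funext hf
    choose c hc using hφ
    refine ⟨|L| * ∑ i, c i, ?_⟩
    have hc' : ∀ᶠ k in (Filter.hyperfilter ℕ : Filter ℕ), ∀ i, |∑ a, f a k * b k x y i a| ≤ c i := by
      rw [Filter.eventually_all]
      intro i
      have := hc i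
      rw [pair, kap_abs, kap_le] at this
      exact this
    rw [pair, kap_abs, kap_le]
    filter_upwards [h, hc'] with k hk hck
    calc _ ≤ L * ∑ i, |∑ a, f a k * b k x y i a| := hk _ _
      _ ≤ |L| * ∑ i, |∑ a, f a k * b k x y i a| :=
        mul_le_mul_of_nonneg_right (le_abs_self L) (Finset.sum_nonneg fun _ _ => abs_nonneg _)
      _ ≤ _ := mul_le_mul_of_nonneg_left (Finset.sum_le_sum fun i _ => hck i) (abs_nonneg L)
  have hleaves : τ.leaves = Finset.univ := by ext i; simp [hl i]
  have hres : ∀ t : ι → KK, restr τ.leaves t = t := by intro t; ext i; simp [restr, hl]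
  -- the sums
  have phi : ∀ (s : ι → ℕ → ℝ) (R : Finset ι) (a : J),
      phiK AA lamK (restr R (fun x => kap (s x))) a =
        kap (fun k => ∑ x ∈ R, s x k * lam k x a) := by
    intro s R a
    have e : (fun k => ∑ x ∈ R, s x k * lam k x a) = ∑ x ∈ R, s x * (fun k => lam k x a) := by
      ext k; simp
    rw [e, map_sum]
    simp only [phiK, LinearMap.coe_mk, AddHom.coe_mk, Finset.sum_apply, Pi.smul_apply, smul_eq_mul,
      restr, ite_mul, zero_mul, map_mul, lamK]
    rw [← Finset.sum_filter]
    simp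
  have memW : ∀ (s : ι → ℕ → ℝ) (R : Finset ι) (x y : ι),
      phiK AA lamK (restr R (fun x => kap (s x))) ∈ WW bK x y ↔
        ∃ c : ℝ, ∀ᶠ k in (Filter.hyperfilter ℕ : Filter ℕ),
          dcR c (b k) (fun x a => s x k * lam k x a) x y R := by
    intro s R x y
    have e : (phiK AA lamK (restr R (fun x => kap (s x)))) =
        fun a => kap (fun k => ∑ x ∈ R, s x k * lam k x a) := funext (phi s R)
    rw [e]
    have e2 : (fun a => kap (fun k => ∑ x ∈ R, s x k * lam k x a)) ∈ WW bK x y ↔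
        ∀ j, ∃ c : ℝ, ∀ᶠ k in (Filter.hyperfilter ℕ : Filter ℕ),
          |∑ a, (∑ x ∈ R, s x k * lam k x a) * b k x y j a| ≤ c := by
      apply forall_congr'
      intro j
      rw [pair, mem_AA]
      simp only [kap_abs, kap_le]
    rw [e2]
    constructor
    · intro h
      choose c hc using h
      refine ⟨∑ j, |c j|, ?_⟩
      filter_upwards [Filter.eventually_all.2 hc] with k hk j
      exact (hk j).trans ((le_abs_self _).trans
        (Finset.single_le_sum (f := fun j => |c j|) (fun _ _ => abs_nonneg _) (Finset.mem_univ j)))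
    · rintro ⟨c, hc⟩ j
      exact ⟨c, hc.mono fun k hk => hk j⟩
  have h1 : (1 : ι → KK) ∈ MM AA lamK (WW bK) τ ⊥ := by
    have e1 : (fun x : ι => kap ((fun _ _ => 1 : ι → ℕ → ℝ) x)) = 1 := by
      ext x; exact map_one kap
    rw [← hres 1]
    apply nodeP_MM AA lamK (WW bK) 1 τ ⊥ hnd hN
    · rw [Submodule.mem_bot]
      ext a
      rw [← e1, phi, hleaves]
      simp only [one_mul, hsum]
      exact map_zero kap
    · have := (NodeP.ev (l := (Filter.hyperfilter ℕ : Filter ℕ)) (p := fun k => dcR 1 (b k) (lam k)) τ).2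
        (Filter.Eventually.of_forall hdc)
      refine NodeP.mono ?_ τ this
      intro x y R h
      rw [← e1, memW]
      refine ⟨1, ?_⟩
      simpa only [one_mul] using h
  obtain ⟨tt, tt0, ttB, ttc, tts, ttM⟩ := decomp AA lamK (WW bK) AA_conv τ hnd hl hN _ 1 rfl
    (fun i => zero_le_one) h1
  choose s hs using fun B x => kap_surj (tt B x)
  have hsB : ∀ B, tt B = fun x => kap (s B x) := fun B => funext fun x => (hs B x).symm
  have ev0 : ∀ᶠ k in (Filter.hyperfilter ℕ : Filter ℕ), ∀ B x, 0 ≤ s B x k := by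
    simp only [Filter.eventually_all]
    intro B x
    have := tt0 B x
    rw [← hs, ← map_zero kap, kap_le] at this
    exact this
  have ev1 : ∀ᶠ k in (Filter.hyperfilter ℕ : Filter ℕ), ∀ B x, x ∉ B → s B x k = 0 := by
    simp only [Filter.eventually_all]
    intro B x hx
    have := ttB B x hx
    rw [← hs, ← map_zero kap, kap_eq] at this
    exact this
  have ev2 : ∀ᶠ k in (Filter.hyperfilter ℕ : Filter ℕ), ∀ B : Finset ι,
      2 ^ Fintype.card J < B.card → ∀ x, s B x k = 0 := by
    simp only [Filter.eventually_all]
    intro B hB x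
    have := ttc B (by rw [Module.finrank_fintype_fun_eq_card]; exact hB) x
    rw [← hs, ← map_zero kap, kap_eq] at this
    exact this
  have ev3 : ∀ᶠ k in (Filter.hyperfilter ℕ : Filter ℕ), ∀ x, ∑ B, s B x k = 1 := by
    simp only [Filter.eventually_all]
    intro x
    have := tts x
    simp only [← hs, ← map_sum] at this
    rw [Pi.one_apply, ← map_one kap, kap_eq] at this
    filter_upwards [this] with k hk
    simpa using hk
  have ev4 : ∀ᶠ k in (Filter.hyperfilter ℕ : Filter ℕ), ∀ B a, ∑ x, s B x k * lam k x a = 0 := by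
    simp only [Filter.eventually_all]
    intro B a
    have h2 := MM_phi AA lamK (WW bK) _ _ _ (ttM B)
    rw [Submodule.mem_bot] at h2
    have h3 := congrFun h2 a
    rw [← hres (tt B), hsB, phi, hleaves, Pi.zero_apply, ← map_zero kap, kap_eq] at h3
    exact h3
  have ev5 : ∀ B, ∃ c : ℝ, ∀ᶠ k in (Filter.hyperfilter ℕ : Filter ℕ),
      NodeP (dcR c (b k) (fun x a => s B x k * lam k x a)) τ := by
    intro B
    have h2 := ttM B
    rw [← hres (tt B)] at h2
    have h3 := MM_nodeP AA lamK (WW bK) (tt B) τ ⊥ hnd h2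
    simp only [hsB, memW] at h3
    obtain ⟨c, hc⟩ := NodeP.bound (p := fun c x y R => ∀ᶠ k in (Filter.hyperfilter ℕ : Filter ℕ),
          dcR c (b k) (fun x a => s B x k * lam k x a) x y R)
      (fun c c' x y R hcc h => h.mono fun k hk j => (hk j).trans hcc) τ h3
    exact ⟨c, (NodeP.ev (p := fun k => dcR c (b k) (fun x a => s B x k * lam k x a)) τ).1 hc⟩
  choose c hc using ev5
  obtain ⟨n, hn⟩ := exists_nat_ge (∑ B, |c B|)
  have ev6 : ∀ᶠ k : ℕ in (Filter.hyperfilter ℕ : Filter ℕ), n ≤ k :=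
    Nat.hyperfilter_le_atTop (Filter.eventually_ge_atTop n)
  obtain ⟨k, k0, k1, k2, k3, k4, k5, k6⟩ := (ev0.and (ev1.and (ev2.and (ev3.and (ev4.and
    ((Filter.eventually_all.2 hc).and ev6)))))).exists
  obtain ⟨B, hB⟩ := hno k (fun B x => s B x k) k0 k1 k2 k3
  refine hB (k4 B) (NodeP.mono ?_ τ (k5 B))
  intro x y R h j
  refine (h j).trans ((le_abs_self _).trans ((Finset.single_le_sum (f := fun j => |c j|)
    (fun _ _ => abs_nonneg _) (Finset.mem_univ B)).trans (hn.trans ?_)))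
  exact_mod_cast k6
end
end WFP

namespace WFP
open T

section
variable {ι J : Type} [Fintype ι] [Fintype J]

theorem NodeP.of_mem {p : ι → ι → Finset ι → Prop} : ∀ τ : T ι,
    (∀ x y R, x ∈ τ.leaves → y ∈ τ.leaves → p x y R) → NodeP p τ
  | leaf _, _ => trivial
  | node l r, h => ⟨NodeP.of_mem l fun x y R hx hy => h x y R (by simp [leaves, hx]) (by simp [leaves, hy]),
      NodeP.of_mem r fun x y R hx hy => h x y R (by simp [leaves, hx]) (by simp [leaves, hy]),
      h _ _ _ (by simp [leaves, base_mem]) (by simp [leaves, base_mem])⟩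

theorem NodeP.and {p q : ι → ι → Finset ι → Prop} : ∀ τ : T ι, NodeP p τ → NodeP q τ →
    NodeP (fun x y R => p x y R ∧ q x y R) τ
  | leaf _, _, _ => trivial
  | node l r, h, h' => ⟨NodeP.and l h.1 h'.1, NodeP.and r h.2.1 h'.2.1, h.2.2, h'.2.2⟩

def compP (C : ℝ) (e : ι → ι → (J → ℝ) ≃ₗ[ℝ] (J → ℝ)) (P : ι → J → ℝ) (x y : ι) (_ : Finset ι) : Prop :=
  ∀ j, |e x y (P x - P y) j| ≤ C

def compS (C : ℝ) (e : ι → ι → (J → ℝ) ≃ₗ[ℝ] (J → ℝ)) (P : ι → J → ℝ) (x y : ι) (_ : Finset ι) : Prop :=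
  ∀ j, |e x y (P x - P y) j| < C

def nestE (L : ℝ) (e : ι → ι → (J → ℝ) ≃ₗ[ℝ] (J → ℝ)) (x y z w : ι) : Prop :=
  ∀ i j, |e x y ((e z w).symm (Pi.single j 1)) i| ≤ L

def bb (e : ι → ι → (J → ℝ) ≃ₗ[ℝ] (J → ℝ)) (x y : ι) (j a : J) : ℝ :=
  (e x y).symm (Pi.single j 1) a

theorem expand (e : (J → ℝ) ≃ₗ[ℝ] (J → ℝ)) (v : J → ℝ) (a : J) :
    v a = ∑ j, e v j * e.symm (Pi.single j 1) a := by
  have h : v = ∑ j, e v j • e.symm (Pi.single j 1) := by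
    apply e.injective
    rw [map_sum]
    ext i
    simp [Finset.sum_apply, Pi.single_apply]
  conv_lhs => rw [h]
  simp [Finset.sum_apply]

theorem pair_expand (e : (J → ℝ) ≃ₗ[ℝ] (J → ℝ)) (φ v : J → ℝ) :
    ∑ a, φ a * v a = ∑ j, e v j * ∑ a, φ a * e.symm (Pi.single j 1) a := by
  simp only [Finset.mul_sum]
  rw [Finset.sum_comm]
  refine Finset.sum_congr rfl fun a _ => ?_
  rw [expand e v a, Finset.mul_sum]
  refine Finset.sum_congr rfl fun j _ => by ring

theorem nest_of (L : ℝ) (e : ι → ι → (J → ℝ) ≃ₗ[ℝ] (J → ℝ)) (x y z w : ι) (h : nestE L e x y z w) :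
    nestR L (bb e) x y z w := by
  intro φ j
  have := pair_expand (e x y) φ (bb e z w j)
  rw [this, Finset.mul_sum]
  refine (Finset.abs_sum_le_sum_abs _ _).trans (Finset.sum_le_sum fun i _ => ?_)
  rw [abs_mul]
  exact mul_le_mul_of_nonneg_right (h i j) (abs_nonneg _)

def nn : T ι → ℕ
  | leaf _ => 0
  | node l r => nn l + nn r + 1

theorem telescope (C : ℝ) (e : ι → ι → (J → ℝ) ≃ₗ[ℝ] (J → ℝ)) (mu P : ι → J → ℝ) :
    ∀ τ : T ι, τ.Nodup → NodeP (dcR C (bb e) mu) τ → NodeP (compP 1 e P) τ →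
    |∑ x ∈ τ.leaves, ∑ a, mu x a * P x a - ∑ a, (∑ x ∈ τ.leaves, mu x a) * P τ.base a| ≤
      nn τ * (Fintype.card J * C)
  | leaf i, _, _, _ => by simp [leaves, nn, base]
  | node l r, hnd, h, hP => by
    have il := abs_le.1 (telescope C e mu P l hnd.1 h.1 hP.1)
    have ir := abs_le.1 (telescope C e mu P r hnd.2.1 h.2.1 hP.2.1)
    have key : |∑ a, (∑ x ∈ r.leaves, mu x a) * (P l.base - P r.base) a| ≤ Fintype.card J * C := by
      rw [pair_expand (e l.base r.base)]
      refine (Finset.abs_sum_le_sum_abs _ _).trans ?_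
      have : (Fintype.card J * C : ℝ) = ∑ j : J, C := by simp
      rw [this]
      refine Finset.sum_le_sum fun j _ => ?_
      rw [abs_mul]
      calc _ ≤ 1 * |∑ a, (∑ x ∈ r.leaves, mu x a) * (e l.base r.base).symm (Pi.single j 1) a| :=
            mul_le_mul_of_nonneg_right (hP.2.2 j) (abs_nonneg _)
        _ ≤ C := by rw [one_mul]; exact h.2.2 j
    have key := abs_le.1 key
    have e1 : ∑ a, (∑ x ∈ r.leaves, mu x a) * (P l.base - P r.base) a =
        ∑ a, (∑ x ∈ r.leaves, mu x a) * P l.base a - ∑ a, (∑ x ∈ r.leaves, mu x a) * P r.base a := by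
      rw [← Finset.sum_sub_distrib]
      exact Finset.sum_congr rfl fun a _ => by simp; ring
    rw [e1] at key
    have e2 : ∑ a, (∑ x ∈ (node l r).leaves, mu x a) * P (node l r).base a =
        ∑ a, (∑ x ∈ l.leaves, mu x a) * P l.base a + ∑ a, (∑ x ∈ r.leaves, mu x a) * P l.base a := by
      rw [← Finset.sum_add_distrib]
      refine Finset.sum_congr rfl fun a _ => ?_
      rw [leaves, Finset.sum_union hnd.2.2, base]; ring
    rw [e2, leaves, Finset.sum_union hnd.2.2, abs_le, nn]
    push_cast
    constructor <;> nlinarith [il.1, il.2, ir.1, ir.2, key.1, key.2]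

theorem dual_dc (C u : ℝ) (hC : 0 < C) (e : ι → ι → (J → ℝ) ≃ₗ[ℝ] (J → ℝ)) (lam : ι → J → ℝ) :
    ∀ τ : T ι, τ.Nodup → (∀ P : ι → J → ℝ, (∀ x ∉ τ.leaves, P x = 0) → P τ.base = 0 →
      NodeP (compS C e P) τ → ∑ x, ∑ a, lam x a * P x a < u) → NodeP (dcR (2 * u / C) (bb e) lam) τ
  | leaf _, _, _ => trivial
  | node l r, hnd, h => by
    have hd := hnd.2.2
    refine ⟨dual_dc C u hC e lam l hnd.1 ?_, dual_dc C u hC e lam r hnd.2.1 ?_, ?_⟩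
    · intro P hP hb hc
      have hz : ∀ x ∈ r.leaves, P x = 0 := fun x hx => hP x (Finset.disjoint_right.1 hd hx)
      refine h P (fun x hx => hP x fun hx' => hx (by simp [leaves, hx'])) hb ⟨hc, ?_, ?_⟩
      · exact NodeP.of_mem r fun x y R hx hy j => by simpa [hz x hx, hz y hy] using hC
      · intro j; simpa [hb, hz _ (base_mem r)] using hC
    · intro P hP hb hc
      have hz : ∀ x ∈ l.leaves, P x = 0 := fun x hx => hP x (Finset.disjoint_left.1 hd hx)
      refine h P (fun x hx => hP x fun hx' => hx (by simp [leaves, hx'])) (hz _ (base_mem l)) ⟨?_, hc, ?_⟩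
      · exact NodeP.of_mem l fun x y R hx hy j => by simpa [hz x hx, hz y hy] using hC
      · intro j; simpa [hb, hz _ (base_mem l)] using hC
    · intro j
      have main : ∀ c : ℝ, |c| < C →
          c * ∑ a, (∑ z ∈ r.leaves, lam z a) * bb e l.base r.base j a < u := by
        intro c hc
        have hl0 : ∀ x ∈ l.leaves, x ∉ r.leaves := fun x hx => Finset.disjoint_left.1 hd hx
        have := h (fun x => if x ∈ r.leaves then c • bb e l.base r.base j else 0) ?_ ?_ ⟨?_, ?_, ?_⟩
        · convert this using 1
          have e1 : ∀ x, ∑ a, lam x a * (if x ∈ r.leaves then c • bb e l.base r.base j else 0 : J → ℝ) a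
              = if x ∈ r.leaves then ∑ a, lam x a * (c * bb e l.base r.base j a) else 0 := by
            intro x; split_ifs <;> simp
          simp only [e1]
          rw [← Finset.sum_filter, Finset.filter_mem_eq_inter, Finset.univ_inter, Finset.sum_comm,
            Finset.mul_sum]
          refine Finset.sum_congr rfl fun a _ => ?_
          rw [Finset.sum_mul, Finset.mul_sum]
          exact Finset.sum_congr rfl fun x _ => by ring
        · intro x hx
          simp only [leaves, Finset.mem_union, not_or] at hx
          simp [hx.2]
        · simp [base, hl0 _ (base_mem l)]
        · exact NodeP.of_mem l fun x y R hx hy j => by simpa [hl0 x hx, hl0 y hy] using hC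
        · exact NodeP.of_mem r fun x y R hx hy j => by simpa [hx, hy] using hC
        · intro i
          have e2 : e l.base r.base (bb e l.base r.base j) = Pi.single j 1 :=
            (e l.base r.base).apply_symm_apply _
          simp only [hl0 _ (base_mem l), base_mem r, if_true, if_false, zero_sub, map_neg, map_smul, e2,
            Pi.neg_apply, abs_neg, Pi.smul_apply, smul_eq_mul, abs_mul]
          by_cases hij : i = j
          · subst hij; simpa using hc
          · simpa [hij] using hC
      have h1 := main (C / 2) (by rw [abs_of_pos (by linarith)]; linarith)
      have h2 := main (-(C / 2)) (by rw [abs_neg, abs_of_pos (by linarith)]; linarith)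
      rw [le_div_iff₀ hC]
      rcases abs_cases (∑ a, (∑ z ∈ r.leaves, lam z a) * bb e l.base r.base j a) with h | h <;>
        · rw [h.1]; nlinarith

theorem isOpen_comp (C : ℝ) (e : ι → ι → (J → ℝ) ≃ₗ[ℝ] (J → ℝ)) : ∀ τ : T ι,
    IsOpen {P : ι → J → ℝ | NodeP (compS C e P) τ}
  | leaf _ => by simp [NodeP]
  | node l r => by
    have e1 : {P : ι → J → ℝ | NodeP (compS C e P) (node l r)} = {P | NodeP (compS C e P) l} ∩
      ({P | NodeP (compS C e P) r} ∩ ⋂ j, {P : ι → J → ℝ | |e l.base r.base (P l.base - P r.base) j| < C}) := by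
      ext P; simp [NodeP, compS]
    rw [e1]
    refine (isOpen_comp C e l).inter ((isOpen_comp C e r).inter (isOpen_iInter_of_finite fun j => ?_))
    apply isOpen_lt _ continuous_const
    have : Continuous (e l.base r.base) := (e l.base r.base).toLinearMap.continuous_of_finiteDimensional
    fun_prop

theorem convex_comp (C : ℝ) (e : ι → ι → (J → ℝ) ≃ₗ[ℝ] (J → ℝ)) (τ : T ι) :
    Convex ℝ {P : ι → J → ℝ | NodeP (compS C e P) τ} := by
  intro P hP Q hQ a b ha hb hab
  refine NodeP.mono ?_ τ (NodeP.and τ hP hQ)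
  rintro x y R ⟨h1, h2⟩ j
  have : e x y ((a • P + b • Q) x - (a • P + b • Q) y) j =
      a * e x y (P x - P y) j + b * e x y (Q x - Q y) j := by
    have : (a • P + b • Q) x - (a • P + b • Q) y = a • (P x - P y) + b • (Q x - Q y) := by
      ext i; simp; ring
    rw [this, map_add, map_smul, map_smul]; rfl
  rw [this]
  have k1 := h1 j
  have k2 := h2 j
  refine (abs_add_le _ _).trans_lt ?_
  rw [abs_mul, abs_mul, abs_of_nonneg ha, abs_of_nonneg hb]
  rcases ha.eq_or_lt with h | h
  · subst h; have : b = 1 := by linarith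
    subst this; simpa using k2
  · calc _ < a * C + b * |e x y (Q x - Q y) j| := by
          have := mul_lt_mul_of_pos_left k1 h; linarith
      _ ≤ a * C + b * C := by have := mul_le_mul_of_nonneg_left k2.le hb; linarith
      _ = C := by rw [← add_mul, hab, one_mul]

theorem select (τ : T ι) (hnd : τ.Nodup) (hl : ∀ i, i ∈ τ.leaves) (L : ℝ) :
    ∃ C : ℝ, 0 < C ∧ ∀ (e : ι → ι → (J → ℝ) ≃ₗ[ℝ] (J → ℝ)), Nes (nestE L e) τ →
      ∀ G : ι → Set (J → ℝ), (∀ x, Convex ℝ (G x)) →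
      (∀ B : Finset ι, B.card ≤ 2 ^ Fintype.card J → ∃ P : ι → J → ℝ, (∀ x ∈ B, P x ∈ G x) ∧
        NodeP (compP 1 e P) τ) →
      ∃ P : ι → J → ℝ, (∀ x, P x ∈ G x) ∧ NodeP (compP C e P) τ := by
  obtain ⟨CB, hCB⟩ := dec_real (J := J) τ hnd hl L
  have hleaves : τ.leaves = Finset.univ := by ext i; simp [hl i]
  set X : ℝ := |∑ B : Finset ι, (nn τ * (Fintype.card J * CB) : ℝ)| with hX
  have hX0 : 0 ≤ X := abs_nonneg _
  set C : ℝ := 2 * X + 2 with hC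
  have hCpos : 0 < C := by linarith
  refine ⟨C, hCpos, ?_⟩
  intro e hne G hG hyp
  by_contra hcon
  have hdis : Disjoint {P : ι → J → ℝ | NodeP (compS C e P) τ} (Set.univ.pi G) := by
    rw [Set.disjoint_left]
    intro P hP hPG
    exact hcon ⟨P, fun x => hPG x trivial, NodeP.mono (fun x y R h j => (h j).le) τ hP⟩
  obtain ⟨f, u, hf1, hf2⟩ := geometric_hahn_banach_open (convex_comp C e τ) (isOpen_comp C e τ)
    (convex_pi fun x _ => hG x) hdis
  let lam : ι → J → ℝ := fun x a => f (Pi.single x (Pi.single a 1))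
  have hf : ∀ P : ι → J → ℝ, f P = ∑ x, ∑ a, lam x a * P x a := by
    intro P
    have : P = ∑ x, ∑ a, P x a • (Pi.single x (Pi.single a 1) : ι → J → ℝ) := by
      ext z c
      simp only [Finset.sum_apply, Pi.smul_apply, Pi.single_apply]
      rw [Finset.sum_eq_single z]
      · simp [Pi.single_apply]
      · intro x _ hx; simp [Ne.symm hx]
      · simp
    conv_lhs => rw [this]
    simp only [map_sum, map_smul, smul_eq_mul, lam]
    exact Finset.sum_congr rfl fun x _ => Finset.sum_congr rfl fun a _ => mul_comm _ _
  have hconst : ∀ v : J → ℝ, NodeP (compS C e (fun _ => v)) τ := fun v =>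
    NodeP.of_mem τ fun x y R _ _ j => by simpa using hCpos
  have hu : 0 < u := by simpa using hf1 0 (hconst 0)
  have hsum : ∀ a, ∑ x, lam x a = 0 := by
    intro a
    have h1 : ∀ c : ℝ, c * ∑ x, lam x a < u := by
      intro c
      have := hf1 _ (hconst (c • Pi.single a 1))
      rw [hf] at this
      convert this using 1
      rw [Finset.mul_sum]
      refine Finset.sum_congr rfl fun x _ => ?_
      rw [Finset.sum_eq_single a] <;> simp +contextual [Pi.single_apply, mul_comm]
    by_contra h0
    have := h1 (u / ∑ x, lam x a)
    rw [div_mul_cancel₀ _ h0] at this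
    exact lt_irrefl _ this
  have hdc := dual_dc C u hCpos e lam τ hnd (fun P _ _ hP => by rw [← hf]; exact hf1 P hP)
  set κ : ℝ := C / (2 * u) with hκ
  have hκpos : 0 < κ := by positivity
  obtain ⟨t, t0, t1, t2, t3, t4⟩ := hCB (bb e) (fun x a => κ * lam x a)
    (Nes.mono (fun x y z w h => nest_of L e x y z w h) τ hne)
    (fun a => by rw [← Finset.mul_sum, hsum, mul_zero])
    (NodeP.mono (fun x y R h j => by
      have : ∑ a, (∑ z ∈ R, κ * lam z a) * bb e x y j a = κ * ∑ a, (∑ z ∈ R, lam z a) * bb e x y j a := by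
        rw [Finset.mul_sum]
        exact Finset.sum_congr rfl fun a _ => by rw [← Finset.mul_sum, mul_assoc]
      rw [this, abs_mul, abs_of_pos hκpos]
      calc _ ≤ κ * (2 * u / C) := mul_le_mul_of_nonneg_left (h j) hκpos.le
        _ = 1 := by rw [hκ]; field_simp) τ hdc)
  have hyp' : ∀ B : Finset ι, ∃ P : ι → J → ℝ, (B.card ≤ 2 ^ Fintype.card J → ∀ x ∈ B, P x ∈ G x) ∧
        NodeP (compP 1 e P) τ := by
    intro B
    by_cases hB : B.card ≤ 2 ^ Fintype.card J
    · obtain ⟨P, h1, h2⟩ := hyp B hB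
      exact ⟨P, fun _ => h1, h2⟩
    · obtain ⟨P, h1, h2⟩ := hyp ∅ (by simp)
      exact ⟨P, fun h => absurd h hB, h2⟩
  choose PB hPB1 hPB2 using hyp'
  have hg : ∀ x, ∃ v, v ∈ G x := fun x => by
    obtain ⟨P, h1, -⟩ := hyp {x} (by simpa using Nat.one_le_two_pow)
    exact ⟨P x, h1 x (by simp)⟩
  choose g hg using hg
  let P : ι → J → ℝ := fun x => ∑ B, t B x • PB B x
  have hPG : ∀ x, P x ∈ G x := by
    intro x
    have : P x = ∑ B, t B x • (if x ∈ B ∧ B.card ≤ 2 ^ Fintype.card J then PB B x else g x) := by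
      refine Finset.sum_congr rfl fun B _ => ?_
      by_cases h1 : x ∈ B
      · by_cases h2 : B.card ≤ 2 ^ Fintype.card J
        · simp [h1, h2]
        · simp [t2 B (by omega) x]
      · simp [t1 B x h1]
    rw [this]
    refine (hG x).sum_mem (fun B _ => t0 B x) (t3 x) (fun B _ => ?_)
    split_ifs with h
    · exact hPB1 B h.2 x h.1
    · exact hg x
  have h1 := hf2 P (fun x _ => hPG x)
  have h2 : κ * f P = ∑ B, ∑ x, ∑ a, (t B x * (κ * lam x a)) * PB B x a := by
    rw [hf, Finset.mul_sum]
    symm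
    rw [Finset.sum_comm]
    refine Finset.sum_congr rfl fun x _ => ?_
    rw [Finset.sum_comm, Finset.mul_sum]
    refine Finset.sum_congr rfl fun a _ => ?_
    simp only [P, Finset.sum_apply, Pi.smul_apply, smul_eq_mul, Finset.mul_sum]
    exact Finset.sum_congr rfl fun B _ => by ring
  have h3 : κ * f P ≤ X := by
    rw [h2]
    refine le_trans (Finset.sum_le_sum fun B _ => ?_) (le_abs_self _)
    have := telescope CB e (fun x a => t B x * (κ * lam x a)) (PB B) τ hnd (t4 B).2 (hPB2 B)
    rw [hleaves] at this
    simp only [(t4 B).1, zero_mul, Finset.sum_const_zero, sub_zero] at this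
    exact (le_abs_self _).trans this
  have h4 : κ * u = C / 2 := by rw [hκ]; field_simp
  have h5 : κ * u ≤ κ * f P := mul_le_mul_of_nonneg_left h1 hκpos.le
  linarith
end
end WFP

namespace WFP
open T

section
variable {ι X : Type} [MetricSpace X]

def GeoN (N : ℕ) (pt : ι → X) (l r : T ι) : Prop :=
  ∃ h : ℝ, 0 < h ∧ ∃ j : ℕ, j < N ∧ (∀ x ∈ l.leaves, dist (pt l.base) (pt x) ≤ j * h) ∧
    (∀ x ∈ r.leaves, (j + 1) * h ≤ dist (pt l.base) (pt x)) ∧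
    (∀ x ∈ r.leaves, dist (pt l.base) (pt x) ≤ N * h)

def Geo (N : ℕ) (pt : ι → X) : T ι → Prop
  | leaf _ => True
  | node l r => Geo N pt l ∧ Geo N pt r ∧ GeoN N pt l r

theorem cluster (N : ℕ) (pt : ι → X) (hpt : Function.Injective pt) :
    ∀ (k : ℕ) (S : Finset ι), S.card = k → k ≤ N → ∀ a ∈ S, ∃ τ : T ι, τ.base = a ∧ τ.leaves = S ∧
      τ.Nodup ∧ τ.depth + 1 ≤ k ∧ Geo N pt τ := by
  intro k
  induction k using Nat.strong_induction_on with
  | _ k ih =>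
  intro S hS hk a ha
  by_cases h1 : S = {a}
  · refine ⟨leaf a, rfl, h1.symm, trivial, ?_, trivial⟩
    subst h1; simp at hS; simp [depth, ← hS]
  obtain ⟨x0, hx0, hmax⟩ := Finset.exists_max_image S (fun x => dist (pt a) (pt x)) ⟨a, ha⟩
  obtain ⟨y, hy, hya⟩ : ∃ y ∈ S, y ≠ a := by
    by_contra hcon
    push Not at hcon
    exact h1 (Finset.eq_singleton_iff_unique_mem.2 ⟨ha, hcon⟩)
  have hρ : 0 < dist (pt a) (pt x0) :=
    lt_of_lt_of_le (dist_pos.2 fun h => hya (hpt h).symm) (hmax y hy)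
  have hNpos : (0 : ℝ) < N := by
    have : 0 < S.card := Finset.card_pos.2 ⟨a, ha⟩
    exact_mod_cast (by omega : 0 < N)
  set h := dist (pt a) (pt x0) / N with hh
  have hpos : 0 < h := by positivity
  have hNh : N * h = dist (pt a) (pt x0) := by rw [hh]; field_simp
  obtain ⟨j, hj, hgap⟩ : ∃ j < N, ∀ x ∈ S, dist (pt a) (pt x) ≤ j * h ∨ (j + 1) * h ≤ dist (pt a) (pt x) := by
    by_contra hcon
    push Not at hcon
    haveI : Nonempty ι := ⟨a⟩
    choose! f hfS hf1 hf2 using hcon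
    have hc : (Finset.range N).card ≤ (S.erase a).card := by
      apply Finset.card_le_card_of_injOn f
      · intro i hi
        have hi : i < N := by simpa using hi
        refine Finset.mem_coe.2 (Finset.mem_erase.2 ⟨fun h0 => ?_, hfS i hi⟩)
        have := hf1 i hi
        rw [h0, dist_self] at this
        have : 0 ≤ (i : ℝ) * h := by positivity
        linarith
      · have key : ∀ i i' : ℕ, i < N → i' < N → f i = f i' → ¬ i < i' := by
          intro i i' hi hi' he hlt
          have a1 := hf2 i hi
          have a2 := hf1 i' hi'
          rw [he] at a1
          have : ((i : ℝ) + 1) * h ≤ i' * h := by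
            apply mul_le_mul_of_nonneg_right _ hpos.le
            exact_mod_cast hlt
          linarith
        intro i hi i' hi' he
        have hi : i < N := by simpa using hi
        have hi' : i' < N := by simpa using hi'
        have := key i i' hi hi' he
        have := key i' i hi' hi he.symm
        omega
    rw [Finset.card_range, Finset.card_erase_of_mem ha] at hc
    have : 0 < S.card := Finset.card_pos.2 ⟨a, ha⟩
    omega
  have hjl : (j : ℝ) * h < (j + 1) * h := by nlinarith
  set Sl := S.filter (fun x => dist (pt a) (pt x) ≤ j * h) with hSl
  set Sr := S.filter (fun x => ¬ dist (pt a) (pt x) ≤ j * h) with hSr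
  have hal : a ∈ Sl := by simp [hSl, ha]; positivity
  have hxr : x0 ∈ Sr := by
    simp only [hSr, Finset.mem_filter, hx0, true_and, not_le, ← hNh]
    apply mul_lt_mul_of_pos_right _ hpos
    exact_mod_cast hj
  have hun : Sl ∪ Sr = S := Finset.filter_union_filter_not_eq _ _
  have hdis : Disjoint Sl Sr := Finset.disjoint_filter_filter_not _ _ _
  have hcard : Sl.card + Sr.card = k := by rw [← Finset.card_union_of_disjoint hdis, hun, hS]
  have hl0 : 0 < Sl.card := Finset.card_pos.2 ⟨a, hal⟩
  have hr0 : 0 < Sr.card := Finset.card_pos.2 ⟨x0, hxr⟩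
  obtain ⟨τl, bl, ll, ndl, dl, gl⟩ := ih Sl.card (by omega) Sl rfl (by omega) a hal
  obtain ⟨τr, br, lr, ndr, dr, gr⟩ := ih Sr.card (by omega) Sr rfl (by omega) x0 hxr
  refine ⟨node τl τr, bl, by rw [leaves, ll, lr, hun], ⟨ndl, ndr, by rw [ll, lr]; exact hdis⟩, ?_, gl, gr, ?_⟩
  · rw [depth]; omega
  · refine ⟨h, hpos, j, hj, ?_, ?_, ?_⟩
    · rw [ll, bl]; intro x hx; exact (Finset.mem_filter.1 hx).2
    · rw [lr, bl]; intro x hx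
      have := Finset.mem_filter.1 hx
      exact (hgap x this.1).resolve_left this.2
    · rw [lr, bl, hNh]; intro x hx
      exact hmax x (Finset.mem_filter.1 hx).1

/-- the geometric relation between an edge and a child edge -/
def geoQ (N : ℕ) (pt : ι → X) (x y z w : ι) : Prop :=
  0 < dist (pt x) (pt y) ∧ 0 < dist (pt z) (pt w) ∧ dist (pt x) (pt z) ≤ dist (pt x) (pt y) ∧
    dist (pt z) (pt w) ≤ 2 * N * dist (pt x) (pt y)

theorem GeoN.facts {N : ℕ} {pt : ι → X} {l r : T ι} (h : GeoN N pt l r) :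
    0 < dist (pt l.base) (pt r.base) ∧
    (∀ x ∈ l.leaves, dist (pt l.base) (pt x) ≤ N * dist (pt l.base) (pt r.base)) ∧
    (∀ x ∈ r.leaves, ∀ y ∈ r.leaves, dist (pt x) (pt y) ≤ 2 * N * dist (pt l.base) (pt r.base)) := by
  obtain ⟨h, hpos, j, hj, h1, h2, h3⟩ := h
  have hd : h ≤ dist (pt l.base) (pt r.base) := by
    have := h2 _ (base_mem r)
    have : 0 ≤ (j : ℝ) * h := by positivity
    nlinarith
  have hN : (0 : ℝ) ≤ N := by positivity
  have hjN : (j : ℝ) ≤ N := by exact_mod_cast hj.le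
  refine ⟨by linarith, fun x hx => ?_, fun x hx y hy => ?_⟩
  · exact (h1 x hx).trans (mul_le_mul hjN hd hpos.le hN)
  · have a1 := h3 x hx
    have a2 := h3 y hy
    have a3 := dist_triangle_left (pt x) (pt y) (pt l.base)
    have : (N : ℝ) * h ≤ N * dist (pt l.base) (pt r.base) := mul_le_mul_of_nonneg_left hd hN
    nlinarith

theorem ch_of_geo {N : ℕ} {pt : ι → X} : ∀ (τ : T ι) (x y : ι), Geo N pt τ → 0 < dist (pt x) (pt y) →
    (dist (pt x) (pt τ.base) ≤ dist (pt x) (pt y)) →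
    (∀ z ∈ τ.leaves, dist (pt τ.base) (pt z) ≤ 2 * N * dist (pt x) (pt y)) → Ch (geoQ N pt) τ x y
  | leaf _, _, _, _, _, _, _ => trivial
  | node l r, x, y, hg, h0, hb, hz => by
    obtain ⟨f1, f2, f3⟩ := hg.2.2.facts
    refine ⟨⟨h0, f1, hb, hz _ (by simp [leaves, base_mem])⟩, ?_, ?_⟩
    · refine ch_of_geo l _ _ hg.1 f1 (by simp) fun z hz => (f2 z hz).trans ?_
      have : (0:ℝ) ≤ N * dist (pt l.base) (pt r.base) := by positivity
      linarith
    · exact ch_of_geo r _ _ hg.2.1 f1 le_rfl fun z hz => f3 _ (base_mem r) z hz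

theorem nes_of_geo {N : ℕ} {pt : ι → X} : ∀ (τ : T ι), Geo N pt τ → Nes (geoQ N pt) τ
  | leaf _, _ => trivial
  | node l r, hg => by
    obtain ⟨f1, f2, f3⟩ := hg.2.2.facts
    refine ⟨?_, ?_⟩
    · refine ch_of_geo l _ _ hg.1 f1 (by simp) fun z hz => (f2 z hz).trans ?_
      have : (0:ℝ) ≤ N * dist (pt l.base) (pt r.base) := by positivity
      linarith
    · exact ch_of_geo r _ _ hg.2.1 f1 le_rfl fun z hz => f3 _ (base_mem r) z hz
end
end WFP

namespace WFP

def dl {n : ℕ} (l : List (Fin n)) (f : En n → ℝ) : En n → ℝ := l.foldr (fun i g => pd1 i g) f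

def lal {n : ℕ} (α : Fin n → ℕ) (l : List (Fin n)) : List (Fin n) :=
  l.flatMap fun i => List.replicate (α i) i

theorem dl_append {n : ℕ} (l l' : List (Fin n)) (f : En n → ℝ) : dl (l ++ l') f = dl l (dl l' f) := by
  simp [dl]

theorem dl_replicate {n : ℕ} (i : Fin n) (k : ℕ) (f : En n → ℝ) :
    dl (List.replicate k i) f = (pd1 i)^[k] f := by
  induction k with
  | zero => rfl
  | succ k ih => rw [List.replicate_succ, Function.iterate_succ_apply', ← ih]; rfl

theorem pdalpha_eq_dl {n : ℕ} (α : Fin n → ℕ) (f : En n → ℝ) :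
    pdalpha α f = dl (lal α (List.finRange n)) f := by
  unfold pdalpha
  induction List.finRange n with
  | nil => rfl
  | cons i l ih =>
    have e : lal α (i :: l) = List.replicate (α i) i ++ lal α l := by simp [lal]
    rw [List.foldr_cons, ih, e, dl_append, dl_replicate]

theorem lal_length {n : ℕ} (α : Fin n → ℕ) : (lal α (List.finRange n)).length = ∑ i, α i := by
  simp [lal, List.length_flatMap, Fin.sum_univ_def]

theorem lal_count {n : ℕ} (α : Fin n → ℕ) (i : Fin n) : (lal α (List.finRange n)).count i = α i := by
  rw [lal, List.count_flatMap]
  have : (List.map (List.count i ∘ fun i => List.replicate (α i) i) (List.finRange n)).sum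
      = ∑ j, if j = i then α j else 0 := by
    rw [Fin.sum_univ_def]
    congr 1
    apply List.map_congr_left
    intro j _
    simp [List.count_replicate]
  rw [this]; simp

theorem pd1_contDiff {n k : ℕ} (i : Fin n) {f : En n → ℝ} (hf : ContDiff ℝ (k + 1 : ℕ) f) :
    ContDiff ℝ k (pd1 i f) := by
  unfold pd1
  exact (hf.fderiv_right (m := k) (by norm_cast)).clm_apply contDiff_const

theorem dl_contDiff {n : ℕ} : ∀ (l : List (Fin n)) {k : ℕ} {f : En n → ℝ},
    ContDiff ℝ (k + l.length : ℕ) f → ContDiff ℝ k (dl l f)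
  | [], k, f, h => h
  | i :: l, k, f, h => by
    apply pd1_contDiff
    apply dl_contDiff l
    have e : k + 1 + l.length = k + (i :: l).length := by simp; omega
    rw [e]; exact h

theorem pd1_comm {n : ℕ} (i j : Fin n) {f : En n → ℝ} (hf : ContDiff ℝ 2 f) :
    pd1 i (pd1 j f) = pd1 j (pd1 i f) := by
  have hd : ∀ x, DifferentiableAt ℝ (fderiv ℝ f) x := fun x =>
    (hf.fderiv_right (m := 1) (by norm_num)).differentiable (by norm_num) x
  have key : ∀ (i j : Fin n) x, pd1 i (pd1 j f) x =
      fderiv ℝ (fderiv ℝ f) x (EuclideanSpace.single i 1) (EuclideanSpace.single j 1) := by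
    intro i j x
    show fderiv ℝ (fun y => fderiv ℝ f y (EuclideanSpace.single j 1)) x _ = _
    rw [fderiv_clm_apply (hd x) (differentiableAt_const _)]
    simp
  ext x
  rw [key, key]
  exact (hf.contDiffAt.isSymmSndFDerivAt (by simp)).eq _ _

theorem dl_perm {n : ℕ} {l l' : List (Fin n)} (h : l.Perm l') {f : En n → ℝ}
    (hf : ContDiff ℝ l.length f) : dl l f = dl l' f := by
  induction h with
  | nil => rfl
  | cons i h ih =>
    show pd1 i (dl _ f) = pd1 i (dl _ f)
    rw [ih (hf.of_le (by simp))]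
  | swap i j l =>
    show pd1 j (pd1 i (dl l f)) = pd1 i (pd1 j (dl l f))
    apply pd1_comm
    apply dl_contDiff l (k := 2)
    convert hf using 2
    simp; omega
  | trans h1 h2 ih1 ih2 => rw [ih1 hf, ih2 (by rw [← h1.length_eq]; exact hf)]

theorem dl_eq_iter {n : ℕ} : ∀ (l : List (Fin n)) {f : En n → ℝ}, ContDiff ℝ l.length f → ∀ x,
    dl l f x = iteratedFDeriv ℝ l.length f x (fun i => EuclideanSpace.single (l.get i) 1)
  | [], f, h, x => by simp [dl]
  | i :: l, f, h, x => by
    show pd1 i (dl l f) x = _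
    have h' : ContDiff ℝ l.length f := h.of_le (by simp)
    rw [funext (dl_eq_iter l h')]
    unfold pd1
    have hd : DifferentiableAt ℝ (iteratedFDeriv ℝ l.length f) x :=
      (h.differentiable_iteratedFDeriv (by simp; norm_cast; omega)) x
    have e : (fun x => (iteratedFDeriv ℝ l.length f x) fun i => EuclideanSpace.single (l.get i) 1) =
      (ContinuousMultilinearMap.apply ℝ (fun _ : Fin l.length => En n) ℝ
        (fun i => EuclideanSpace.single (l.get i) 1)) ∘ (iteratedFDeriv ℝ l.length f) := rfl
    rw [e, fderiv_comp _ (ContinuousLinearMap.differentiableAt _) hd]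
    erw [iteratedFDeriv_succ_apply_left]
    simp
    rfl

theorem norm_single_one {n : ℕ} (i : Fin n) : ‖(EuclideanSpace.single i 1 : En n)‖ = 1 := by simp

theorem conv1 {n : ℕ} (α : Fin n → ℕ) {f : En n → ℝ} {k : ℕ} (hk : ∑ i, α i = k) (hf : ContDiff ℝ k f)
    (x : En n) : |pdalpha α f x| ≤ ‖iteratedFDeriv ℝ k f x‖ := by
  have hk' : (lal α (List.finRange n)).length = k := by rw [lal_length, hk]
  subst hk'
  rw [pdalpha_eq_dl, dl_eq_iter _ hf, ← Real.norm_eq_abs]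
  refine (ContinuousMultilinearMap.le_opNorm _ _).trans ?_
  simp

theorem conv2 {n : ℕ} {f : En n → ℝ} {k : ℕ} (hf : ContDiff ℝ k f) (x : En n) (C : ℝ) (hC : 0 ≤ C)
    (h : ∀ α : Fin n → ℕ, ∑ i, α i = k → |pdalpha α f x| ≤ C) :
    ‖iteratedFDeriv ℝ k f x‖ ≤ n ^ k * C := by
  apply ContinuousMultilinearMap.opNorm_le_bound (by positivity)
  intro v
  have hv : v = fun i => ∑ a : Fin n, v i a • (EuclideanSpace.single a 1 : En n) := by
    ext i a
    simp [Finset.sum_apply, Pi.single_apply]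
  have e1 : iteratedFDeriv ℝ k f x v = ∑ r : Fin k → Fin n,
      (∏ i, v i (r i)) * iteratedFDeriv ℝ k f x (fun i => EuclideanSpace.single (r i) 1) := by
    conv_lhs => rw [hv]
    rw [ContinuousMultilinearMap.map_sum]
    refine Finset.sum_congr rfl fun r _ => ?_
    rw [ContinuousMultilinearMap.map_smul_univ, smul_eq_mul]
  rw [e1]
  have e2 : ∀ r : Fin k → Fin n, |iteratedFDeriv ℝ k f x (fun i => EuclideanSpace.single (r i) 1)| ≤ C := by
    intro r
    have hlen : (List.ofFn r).length = k := List.length_ofFn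
    have h1 := dl_eq_iter (List.ofFn r) (f := f) (by rw [hlen]; exact hf) x
    have h2 : iteratedFDeriv ℝ (List.ofFn r).length f x (fun i => EuclideanSpace.single ((List.ofFn r).get i) 1)
        = iteratedFDeriv ℝ k f x (fun i => EuclideanSpace.single (r i) 1) := by
      have : ∀ k' (hk' : k' = k) (w : Fin k' → En n),
        (∀ i, w i = EuclideanSpace.single (r (Fin.cast hk' i)) 1) →
        iteratedFDeriv ℝ k' f x w = iteratedFDeriv ℝ k f x (fun i => EuclideanSpace.single (r i) 1) := by
        rintro k' rfl w hw
        congr 1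
        ext1 i; exact hw i
      apply this _ hlen
      intro i
      simp only [List.get_ofFn]
    rw [← h2, ← h1]
    let α : Fin n → ℕ := fun i => (List.ofFn r).count i
    have hp : (List.ofFn r).Perm (lal α (List.finRange n)) := by
      rw [List.perm_iff_count]
      intro a; rw [lal_count]
    rw [dl_perm hp (by rw [hlen]; exact hf), ← pdalpha_eq_dl]
    apply h
    rw [← lal_length, ← hp.length_eq, hlen]
  refine (Finset.abs_sum_le_sum_abs _ _).trans ?_
  calc _ ≤ ∑ r : Fin k → Fin n, (∏ i, ‖v i‖) * C := by
        refine Finset.sum_le_sum fun r _ => ?_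
        rw [abs_mul]
        refine mul_le_mul ?_ (e2 r) (abs_nonneg _) (by positivity)
        rw [Finset.abs_prod]
        refine Finset.prod_le_prod (fun _ _ => abs_nonneg _) fun i _ => ?_
        rw [← Real.norm_eq_abs]; exact PiLp.norm_apply_le (v i) (r i)
    _ = _ := by simp; ring

theorem growth {n m : ℕ} {f : En n → ℝ} (hf : ContDiff ℝ m f) (a : En n) (A M R δ : ℝ) (hA : 0 ≤ A)
    (hM : 0 ≤ M) (hR : 0 ≤ R) (hδ : 0 ≤ δ) (hm : ∀ y ∈ Metric.closedBall a (R * δ), ‖iteratedFDeriv ℝ m f y‖ ≤ M)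
    (ha : ∀ k < m, ‖iteratedFDeriv ℝ k f a‖ ≤ A * δ ^ (m - k)) :
    ∀ i k, k + i = m → ∀ y ∈ Metric.closedBall a (R * δ),
      ‖iteratedFDeriv ℝ k f y‖ ≤ (A + M) * (1 + R) ^ i * δ ^ i := by
  intro i
  induction i with
  | zero =>
    intro k hk y hy
    simp only [add_zero] at hk
    subst hk
    simpa using (hm y hy).trans (by linarith)
  | succ i ih =>
    intro k hk y hy
    have hd : ∀ z ∈ Metric.closedBall a (R * δ), DifferentiableAt ℝ (iteratedFDeriv ℝ k f) z := fun z _ =>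
      hf.differentiable_iteratedFDeriv (by norm_cast; omega) z
    have hb : ∀ z ∈ Metric.closedBall a (R * δ), ‖fderiv ℝ (iteratedFDeriv ℝ k f) z‖ ≤
        (A + M) * (1 + R) ^ i * δ ^ i := by
      intro z hz
      rw [norm_fderiv_iteratedFDeriv]
      exact ih (k + 1) (by omega) z hz
    have h1 := (convex_closedBall a (R * δ)).norm_image_sub_le_of_norm_fderiv_le hd hb
      (Metric.mem_closedBall_self (by positivity)) hy
    have h2 := ha k (by omega)
    have h3 : m - k = i + 1 := by omega
    rw [h3] at h2
    have h4 : ‖y - a‖ ≤ R * δ := by simpa [dist_eq_norm] using hy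
    have h5 : ‖iteratedFDeriv ℝ k f y‖ ≤ ‖iteratedFDeriv ℝ k f a‖ +
      ‖iteratedFDeriv ℝ k f y - iteratedFDeriv ℝ k f a‖ := by
      have := norm_add_le (iteratedFDeriv ℝ k f a) (iteratedFDeriv ℝ k f y - iteratedFDeriv ℝ k f a)
      simpa using this
    have h6 : (A + M) * (1 + R) ^ i * δ ^ i * ‖y - a‖ ≤ (A + M) * (1 + R) ^ i * δ ^ i * (R * δ) :=
      mul_le_mul_of_nonneg_left h4 (by positivity)
    have h7 : (1:ℝ) ≤ (1 + R) ^ i := one_le_pow₀ (by linarith)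
    have h8 : A * δ ^ (i + 1) ≤ (A + M) * (1 + R) ^ i * δ ^ (i + 1) := by
      apply mul_le_mul_of_nonneg_right _ (by positivity)
      nlinarith
    calc _ ≤ A * δ ^ (i + 1) + (A + M) * (1 + R) ^ i * δ ^ i * (R * δ) := by linarith
      _ ≤ (A + M) * (1 + R) ^ i * δ ^ (i + 1) + (A + M) * (1 + R) ^ i * δ ^ i * (R * δ) := by linarith
      _ = _ := by ring
end WFP

namespace WFP
open MvPolynomial

def evp {n : ℕ} (p : MvPolynomial (Fin n) ℝ) : En n → ℝ := fun y => eval (fun i => y i) p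

theorem evp_contDiff {n : ℕ} (p : MvPolynomial (Fin n) ℝ) (k : WithTop ℕ∞) : ContDiff ℝ k (evp p) := by
  unfold evp
  induction p using MvPolynomial.induction_on with
  | C a => simpa using contDiff_const
  | add p q hp hq => simpa using hp.add hq
  | mul_X p i hp =>
    simp only [map_mul, eval_X]
    exact hp.mul (by fun_prop)

theorem pd1_add {n : ℕ} (i : Fin n) {f g : En n → ℝ} (hf : Differentiable ℝ f) (hg : Differentiable ℝ g) :
    pd1 i (f + g) = pd1 i f + pd1 i g := by
  ext x; simp [pd1, fderiv_add (hf x) (hg x)]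

theorem pd1_evp {n : ℕ} (i : Fin n) (p : MvPolynomial (Fin n) ℝ) : pd1 i (evp p) = evp (pderiv i p) := by
  induction p using MvPolynomial.induction_on with
  | C a =>
    have : evp (C a : MvPolynomial (Fin n) ℝ) = fun _ => a := by ext; simp [evp]
    ext x; rw [this]; simp [pd1, evp]
  | add p q hp hq =>
    have h : ∀ p q : MvPolynomial (Fin n) ℝ, evp (p + q) = evp p + evp q := fun p q => by ext; simp [evp]
    rw [h, map_add, h, ← hp, ← hq, pd1_add]
    · exact (evp_contDiff p 1).differentiable (by simp)
    · exact (evp_contDiff q 1).differentiable (by simp)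
  | mul_X p j hp =>
    have h : evp (p * X j) = fun y => evp p y * y j := by ext; simp [evp]
    ext x
    have hd : DifferentiableAt ℝ (fun y : En n => y j) x := by fun_prop
    have hfd : fderiv ℝ (fun y : En n => y j) x (EuclideanSpace.single i 1) = if j = i then 1 else 0 := by
      have : (fun y : En n => y j) = (EuclideanSpace.proj j : En n →L[ℝ] ℝ) := rfl
      rw [this, ContinuousLinearMap.fderiv]
      simp [Pi.single_apply]
    rw [h]
    unfold pd1
    rw [fderiv_fun_mul ((evp_contDiff p 1).differentiable (by simp) x) hd]
    have hp' := congrFun hp x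
    unfold pd1 at hp'
    simp only [_root_.add_apply, _root_.smul_apply, hfd, hp', smul_eq_mul]
    simp only [evp, Derivation.leibniz, pderiv_X, smul_eq_mul, map_add, map_mul, eval_X, Pi.single_apply]
    by_cases hij : j = i
    · subst hij; simp
    · have hij' : ¬ i = j := fun h => hij h.symm
      simp [hij, hij']

theorem pdalpha_evp {n : ℕ} (α : Fin n → ℕ) (p : MvPolynomial (Fin n) ℝ) :
    pdalpha α (evp p) = evp (polyPD α p) := by
  unfold pdalpha polyPD
  have it : ∀ (i : Fin n) (k : ℕ) (q : MvPolynomial (Fin n) ℝ),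
      (pd1 i)^[k] (evp q) = evp ((fun r => pderiv i r)^[k] q) := by
    intro i k q
    induction k with
    | zero => rfl
    | succ k ih => rw [Function.iterate_succ_apply', Function.iterate_succ_apply', ih, pd1_evp]
  induction List.finRange n with
  | nil => rfl
  | cons i l ih => rw [List.foldr_cons, List.foldr_cons, ih, it]

theorem iter_lin {n : ℕ} (i : Fin n) (k : ℕ) (p : MvPolynomial (Fin n) ℝ) :
    (fun r => pderiv i r)^[k] p = ((pderiv i : Derivation ℝ _ _).toLinearMap ^ k : Module.End ℝ _) p := by
  rw [Module.End.pow_apply]; rfl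

def polyL {n : ℕ} (α : Fin n → ℕ) : MvPolynomial (Fin n) ℝ →ₗ[ℝ] MvPolynomial (Fin n) ℝ :=
  (List.finRange n).foldr
    (fun i L => ((pderiv i : Derivation ℝ _ _).toLinearMap ^ (α i) : Module.End ℝ _) * L) LinearMap.id

theorem polyL_eq {n : ℕ} (α : Fin n → ℕ) (p : MvPolynomial (Fin n) ℝ) : polyL α p = polyPD α p := by
  unfold polyL polyPD
  induction List.finRange n with
  | nil => rfl
  | cons i l ih =>
    rw [List.foldr_cons, List.foldr_cons, Module.End.mul_apply, ih, iter_lin]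

def mon {n : ℕ} (x : En n) (β : Fin n → ℕ) : MvPolynomial (Fin n) ℝ := ∏ i, (X i - C (x i)) ^ (β i)

theorem pderiv_mon {n : ℕ} (x : En n) (β : Fin n → ℕ) (i : Fin n) :
    pderiv i (mon x β) = C (β i : ℝ) * mon x (Function.update β i (β i - 1)) := by
  have h1 : ∀ β : Fin n → ℕ, mon x β = (X i - C (x i)) ^ (β i) * ∏ j ∈ Finset.univ.erase i, (X j - C (x j)) ^ (β j) :=
    fun β => (Finset.mul_prod_erase _ _ (Finset.mem_univ i)).symm
  have h2 : pderiv i (∏ j ∈ Finset.univ.erase i, (X j - C (x j)) ^ (β j)) = 0 := by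
    have key : ∀ s : Finset (Fin n), i ∉ s → pderiv i (∏ j ∈ s, (X j - C (x j)) ^ (β j)) = 0 := by
      intro s
      induction s using Finset.induction_on with
      | empty => intro _; simp
      | insert j s hj ih =>
        intro hi
        simp only [Finset.mem_insert, not_or] at hi
        rw [Finset.prod_insert hj, Derivation.leibniz, ih hi.2, Derivation.leibniz_pow, map_sub,
          pderiv_X_of_ne (Ne.symm hi.1), pderiv_C]
        simp
    exact key _ (by simp)
  rw [h1, h1, Derivation.leibniz, h2, Derivation.leibniz_pow, map_sub, pderiv_X_self, pderiv_C,
    Function.update_self]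
  have h3 : ∏ j ∈ Finset.univ.erase i, (X j - C (x j)) ^ (Function.update β i (β i - 1) j) =
      ∏ j ∈ Finset.univ.erase i, (X j - C (x j) : MvPolynomial (Fin n) ℝ) ^ (β j) := by
    refine Finset.prod_congr rfl fun j hj => ?_
    rw [Function.update_of_ne (Finset.ne_of_mem_erase hj)]
  rw [h3]
  simp only [smul_zero, zero_add, sub_zero, smul_eq_mul, mul_one, nsmul_eq_mul]
  rw [map_natCast]
  ring

theorem iter_mon {n : ℕ} (x : En n) (β : Fin n → ℕ) (i : Fin n) (c : ℝ) (a : ℕ) :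
    (fun r => pderiv i r)^[a] (C c * mon x β) =
      C (c * (β i).descFactorial a) * mon x (Function.update β i (β i - a)) := by
  induction a with
  | zero => simp
  | succ a ih =>
    rw [Function.iterate_succ_apply', ih]
    show pderiv i _ = _
    rw [pderiv_C_mul, pderiv_mon, Function.update_self, Function.update_idem, Nat.descFactorial_succ,
      ← mul_assoc, ← C_mul, Nat.sub_sub]
    congr 2
    push_cast; ring

theorem polyPD_mon {n : ℕ} (x : En n) (α β : Fin n → ℕ) (c : ℝ) :
    polyPD α (C c * mon x β) =
      C (c * ∏ i, ((β i).descFactorial (α i) : ℝ)) * mon x (fun i => β i - α i) := by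
  have key : ∀ l : List (Fin n), l.Nodup →
      l.foldr (fun i q => (fun r => pderiv i r)^[α i] q) (C c * mon x β) =
        C (c * (l.map fun i => ((β i).descFactorial (α i) : ℝ)).prod) *
          mon x (fun i => if i ∈ l then β i - α i else β i) := by
    intro l hl
    induction l with
    | nil => simp
    | cons i l ih =>
      rw [List.nodup_cons] at hl
      rw [List.foldr_cons, ih hl.2, iter_mon]
      simp only [hl.1, if_false, List.map_cons, List.prod_cons]
      congr 1
      · congr 1; ring
      · congr 1; ext j
        by_cases hj : j = i
        · subst hj; simp
        · simp [hj]
  unfold polyPD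
  rw [key _ (List.nodup_finRange n), Fin.prod_univ_def]
  simp

theorem evp_mon_self {n : ℕ} (x : En n) (β : Fin n → ℕ) : evp (mon x β) x = if β = 0 then 1 else 0 := by
  unfold evp mon
  rw [map_prod]
  simp only [map_pow, map_sub, eval_X, eval_C, sub_self]
  split_ifs with h
  · simp [h]
  · obtain ⟨i, hi⟩ := Function.ne_iff.1 h
    exact Finset.prod_eq_zero (Finset.mem_univ i) (zero_pow hi)

theorem pdalpha_mon_self {n : ℕ} (x : En n) (α β : Fin n → ℕ) (c : ℝ) :
    pdalpha α (evp (C c * mon x β)) x = if α = β then c * ((∏ i, Nat.factorial (α i) : ℕ) : ℝ) else 0 := by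
  rw [pdalpha_evp, polyPD_mon]
  have : ∀ (c : ℝ) q, evp (C c * q) x = c * evp q x := fun c q => by simp [evp]
  rw [this, evp_mon_self]
  by_cases h : α = β
  · subst h
    simp only [tsub_self, if_true, Nat.descFactorial_self]
    rw [if_pos (by rfl)]; push_cast; ring
  · rw [if_neg h]
    by_cases h2 : (fun i => β i - α i) = 0
    · rw [if_pos h2]
      obtain ⟨i, hi⟩ := Function.ne_iff.1 h
      have h3 := congrFun h2 i
      simp only [Pi.zero_apply] at h3
      have : (β i).descFactorial (α i) = 0 := Nat.descFactorial_of_lt (by omega)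
      rw [Finset.prod_eq_zero (Finset.mem_univ i) (by rw [this]; simp)]
      simp
    · rw [if_neg h2]; simp

theorem pdalpha_mon_zero {n : ℕ} (x : En n) (α β : Fin n → ℕ) (c : ℝ) (h : ∑ i, β i < ∑ i, α i) (y : En n) :
    pdalpha α (evp (C c * mon x β)) y = 0 := by
  rw [pdalpha_evp, polyPD_mon]
  obtain ⟨i, -, hi⟩ := Finset.exists_lt_of_sum_lt h
  rw [Finset.prod_eq_zero (Finset.mem_univ i) (by rw [Nat.descFactorial_of_lt hi]; simp)]
  simp [evp]

/-- linear functional `p ↦ ∂^α p (x)` -/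
def dP {n : ℕ} (α : Fin n → ℕ) (x : En n) : MvPolynomial (Fin n) ℝ →ₗ[ℝ] ℝ :=
  (MvPolynomial.aeval (fun i => x i) : MvPolynomial (Fin n) ℝ →ₐ[ℝ] ℝ).toLinearMap ∘ₗ polyL α

theorem dP_eq {n : ℕ} (α : Fin n → ℕ) (x : En n) (p : MvPolynomial (Fin n) ℝ) :
    dP α x p = pdalpha α (evp p) x := by
  rw [pdalpha_evp, ← polyL_eq]
  simp only [dP, LinearMap.comp_apply, AlgHom.toLinearMap_apply, evp]
  rw [MvPolynomial.aeval_eq_eval]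

def IsP {n : ℕ} (m : ℕ) (p : MvPolynomial (Fin n) ℝ) : Prop :=
  ∀ α : Fin n → ℕ, ∑ i, α i = m → ∀ y, dP α y p = 0

theorem isP_of_degree {n m : ℕ} (hm : 1 ≤ m) (p : MvPolynomial (Fin n) ℝ) (h : p.totalDegree ≤ m - 1) :
    IsP m p := by
  intro α hα y
  rw [p.as_sum, map_sum]
  refine Finset.sum_eq_zero fun s hs => ?_
  have e : monomial s (coeff s p) = C (coeff s p) * mon (0 : En n) s := by
    rw [monomial_eq, mon, Finsupp.prod_fintype _ _ (by simp)]
    simp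
  rw [e, dP_eq]
  apply pdalpha_mon_zero
  have := le_totalDegree hs
  rw [Finsupp.sum_fintype _ _ (by simp)] at this
  omega

abbrev J0 (n m : ℕ) : Type := {α : Fin n → Fin m // ∑ i, (α i : ℕ) ≤ m - 1}

def J0.v {n m : ℕ} (α : J0 n m) : Fin n → ℕ := fun i => (α.1 i : ℕ)

theorem J0.v_inj {n m : ℕ} : Function.Injective (J0.v : J0 n m → Fin n → ℕ) := by
  intro a b h
  apply Subtype.ext; ext i
  exact congrFun h i

theorem J0.lt {n m : ℕ} (hm : 1 ≤ m) (α : J0 n m) : ∑ i, α.v i < m := by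
  have := α.2; unfold J0.v; omega

theorem J0.surj {n m : ℕ} (α : Fin n → ℕ) (h : ∑ i, α i < m) : ∃ a : J0 n m, a.v = α := by
  have h1 : ∀ i, α i < m := fun i => (Finset.single_le_sum (fun _ _ => Nat.zero_le _) (Finset.mem_univ i)).trans_lt h
  exact ⟨⟨fun i => ⟨α i, h1 i⟩, by simp; omega⟩, rfl⟩

def Psi {n m : ℕ} (x : En n) : (J0 n m → ℝ) →ₗ[ℝ] MvPolynomial (Fin n) ℝ where
  toFun v := ∑ α : J0 n m, C (v α / ((∏ i, Nat.factorial (α.v i) : ℕ) : ℝ)) * mon x α.v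
  map_add' v w := by
    rw [← Finset.sum_add_distrib]
    refine Finset.sum_congr rfl fun α _ => ?_
    rw [Pi.add_apply, add_div, C_add, add_mul]
  map_smul' c v := by
    simp only [RingHom.id_apply, Finset.smul_sum, smul_eq_C_mul]
    refine Finset.sum_congr rfl fun α _ => ?_
    rw [Pi.smul_apply, smul_eq_mul, mul_div_assoc, C_mul, mul_assoc]

theorem jet_eq {n m : ℕ} (f : En n → ℝ) (x : En n) :
    jetScalar m f x = Psi x (fun α : J0 n m => pdalpha α.v f x) := by
  unfold jetScalar Psi
  simp only [LinearMap.coe_mk, AddHom.coe_mk]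
  rw [← Finset.sum_subtype_eq_sum_filter, Finset.subtype_univ]
  rfl

theorem dP_Psi {n m : ℕ} (x : En n) (v : J0 n m → ℝ) (α : J0 n m) : dP α.v x (Psi x v) = v α := by
  simp only [Psi, LinearMap.coe_mk, AddHom.coe_mk, map_sum, dP_eq, pdalpha_mon_self]
  rw [Finset.sum_eq_single α]
  · rw [if_pos rfl, div_mul_cancel₀]
    norm_cast
    exact Finset.prod_ne_zero_iff.2 fun i _ => Nat.factorial_ne_zero _
  · intro β _ hβ
    rw [if_neg fun h => hβ (J0.v_inj h).symm]
  · simp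

theorem isP_Psi {n m : ℕ} (hm : 1 ≤ m) (x : En n) (v : J0 n m → ℝ) : IsP m (Psi x v) := by
  intro α hα y
  simp only [Psi, LinearMap.coe_mk, AddHom.coe_mk, map_sum, dP_eq]
  refine Finset.sum_eq_zero fun β _ => pdalpha_mon_zero _ _ _ _ ?_ _
  rw [hα]; exact β.lt hm

theorem IsP.sub {n m : ℕ} {p q : MvPolynomial (Fin n) ℝ} (hp : IsP m p) (hq : IsP m q) : IsP m (p - q) := by
  intro α hα y
  rw [map_sub, hp α hα y, hq α hα y, sub_zero]

theorem IsP.iter {n m : ℕ} {p : MvPolynomial (Fin n) ℝ} (hp : IsP m p) (y : En n) :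
    iteratedFDeriv ℝ m (evp p) y = 0 := by
  have := conv2 (evp_contDiff p m) y 0 le_rfl (fun α hα => by rw [← dP_eq, hp α hα y, abs_zero])
  simpa using this

theorem IsP.eq_zero {n m : ℕ} {p : MvPolynomial (Fin n) ℝ} (hp : IsP m p) (x : En n)
    (h : ∀ α : J0 n m, dP α.v x p = 0) : p = 0 := by
  apply MvPolynomial.funext
  intro y
  rw [map_zero]
  let y' : En n := WithLp.toLp 2 y
  have hk : ∀ k < m, iteratedFDeriv ℝ k (evp p) x = 0 := by
    intro k hk
    have := conv2 (evp_contDiff p k) x 0 le_rfl (fun α hα => by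
      obtain ⟨a, rfl⟩ := J0.surj (m := m) α (by omega)
      rw [← dP_eq, h a, abs_zero])
    simpa using this
  have := growth (m := m) (evp_contDiff p m) x 0 0 1 (dist y' x) le_rfl le_rfl zero_le_one dist_nonneg
    (fun y _ => by rw [hp.iter]; simp) (fun k hk' => by rw [hk k hk']; simp) m 0 (by omega) y' (by simp)
  simp at this
  exact this

/-- Taylor reproduction -/
theorem Psi_dP {n m : ℕ} (hm : 1 ≤ m) {p : MvPolynomial (Fin n) ℝ} (hp : IsP m p) (x : En n) :
    Psi x (fun α : J0 n m => dP α.v x p) = p := by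
  rw [← sub_eq_zero]
  apply ((isP_Psi hm x _).sub hp).eq_zero x
  intro α
  rw [map_sub, dP_Psi, sub_self]

theorem jet_evp {n m : ℕ} (hm : 1 ≤ m) {p : MvPolynomial (Fin n) ℝ} (hp : IsP m p) (x : En n) :
    jetScalar m (evp p) x = p := by
  rw [jet_eq]
  simp only [← dP_eq]
  exact Psi_dP hm hp x
end WFP

namespace WFP
open T

theorem bump_bound {n : ℕ} (m : ℕ) (f : ContDiffBump (0 : En n)) :
    ∃ K : ℝ, 0 ≤ K ∧ ∀ i ≤ m, ∀ y, ‖iteratedFDeriv ℝ i f y‖ ≤ K := by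
  have h : ∀ i : ℕ, ∃ K : ℝ, ∀ y, ‖iteratedFDeriv ℝ i f y‖ ≤ K := fun i => by
    have hc : ContDiff ℝ (i : ℕ∞) f := f.contDiff
    exact (f.hasCompactSupport.iteratedFDeriv (𝕜 := ℝ) i).exists_bound_of_continuous
      (hc.continuous_iteratedFDeriv (m := i) (by simp))
  choose K hK using h
  refine ⟨∑ i ∈ Finset.range (m + 1), |K i|, Finset.sum_nonneg fun _ _ => abs_nonneg _, fun i hi y => ?_⟩
  refine ((hK i y).trans (le_abs_self _)).trans ?_
  exact Finset.single_le_sum (f := fun i => |K i|) (fun _ _ => abs_nonneg _) (Finset.mem_range.2 (by omega))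

def bmp (n j : ℕ) : ContDiffBump (0 : En n) where
  rIn := j + 1/3
  rOut := j + 2/3
  rIn_pos := by positivity
  rIn_lt_rOut := by linarith

theorem cutoff (n m N : ℕ) : ∃ K : ℝ, 0 ≤ K ∧ ∀ (a : En n) (h : ℝ), 0 < h → ∀ j < N,
    ∃ χ : En n → ℝ, ContDiff ℝ m χ ∧ (∀ y, dist a y ≤ j * h → χ =ᶠ[nhds y] fun _ => 1) ∧
      (∀ y, (j + 1) * h ≤ dist a y → χ =ᶠ[nhds y] fun _ => 0) ∧
      ∀ i ≤ m, ∀ y, ‖iteratedFDeriv ℝ i χ y‖ * h ^ i ≤ K := by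
  have hb := fun j => bump_bound m (bmp n j)
  choose K hK0 hK using hb
  refine ⟨∑ j ∈ Finset.range N, K j, Finset.sum_nonneg fun _ _ => hK0 _, ?_⟩
  intro a h hh j hj
  let L : En n →L[ℝ] En n := h⁻¹ • ContinuousLinearMap.id ℝ (En n)
  have hLd : ∀ y, dist (L (y - a)) 0 = h⁻¹ * dist a y := by
    intro y
    simp [L, norm_smul, abs_of_pos hh, dist_comm a y, dist_eq_norm]
  have hcont : Continuous fun y : En n => L (y - a) := by fun_prop
  have hcd : ContDiff ℝ m (bmp n j) := by
    have : ContDiff ℝ (m : ℕ∞) (bmp n j) := (bmp n j).contDiff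
    exact_mod_cast this
  refine ⟨fun y => (bmp n j ∘ L) (y - a), ?_, ?_, ?_, ?_⟩
  · exact (hcd.comp L.contDiff).comp (contDiff_id.sub contDiff_const)
  · intro y hy
    have : L (y - a) ∈ Metric.ball (0 : En n) (bmp n j).rIn := by
      rw [Metric.mem_ball, hLd]
      show _ < (j : ℝ) + 1/3
      have : h⁻¹ * dist a y ≤ j := by
        rw [inv_mul_le_iff₀ hh]; linarith
      linarith
    exact (hcont.tendsto y).eventually ((bmp n j).eventuallyEq_one_of_mem_ball this)
  · intro y hy
    have : (bmp n j).rOut < dist (L (y - a)) 0 := by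
      rw [hLd]
      show (j : ℝ) + 2/3 < _
      have : (j : ℝ) + 1 ≤ h⁻¹ * dist a y := by
        rw [le_inv_mul_iff₀ hh]; linarith
      linarith
    have hev : ∀ᶠ z in nhds y, (bmp n j).rOut < dist (L (z - a)) 0 :=
      (hcont.dist continuous_const).continuousAt.eventually (lt_mem_nhds this)
    filter_upwards [hev] with z hz
    exact (bmp n j).zero_of_le_dist hz.le
  · intro i hi y
    rw [iteratedFDeriv_comp_sub, L.iteratedFDeriv_comp_right hcd _ (by exact_mod_cast hi)]
    have h1 := ContinuousMultilinearMap.norm_compContinuousLinearMap_le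
      (iteratedFDeriv ℝ i (bmp n j) (L (y - a))) (fun _ => L)
    have h2 : ‖L‖ ≤ h⁻¹ := by
      have := norm_smul_le h⁻¹ (ContinuousLinearMap.id ℝ (En n))
      rw [Real.norm_eq_abs, abs_of_pos (inv_pos.2 hh)] at this
      refine this.trans ?_
      have := ContinuousLinearMap.norm_id_le (𝕜 := ℝ) (E := En n)
      have := inv_pos.2 hh
      nlinarith
    rw [Finset.prod_const, Finset.card_univ, Fintype.card_fin] at h1
    calc _ ≤ (‖iteratedFDeriv ℝ i (bmp n j) (L (y - a))‖ * ‖L‖ ^ i) * h ^ i := by gcongr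
      _ ≤ (‖iteratedFDeriv ℝ i (bmp n j) (L (y - a))‖ * h⁻¹ ^ i) * h ^ i := by gcongr
      _ = ‖iteratedFDeriv ℝ i (bmp n j) (L (y - a))‖ := by
        rw [mul_assoc, ← mul_pow, inv_mul_cancel₀ hh.ne', one_pow, mul_one]
      _ ≤ K j := hK j i hi _
      _ ≤ _ := Finset.single_le_sum (f := K) (fun _ _ => hK0 _) (Finset.mem_range.2 hj)

/-- one gluing step -/
theorem glue1 (n m N : ℕ) (hm : 1 ≤ m) (M γl γr : ℝ) (hM : 0 ≤ M) (hγl : 0 ≤ γl) (hγr : 0 ≤ γr) :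
    ∃ γ : ℝ, 0 ≤ γ ∧ ∀ (a b : En n) (h : ℝ) (j : ℕ) (pa pb : MvPolynomial (Fin n) ℝ) (Fl Fr : En n → ℝ),
      0 < h → j < N → (j + 1) * h ≤ dist a b → dist a b ≤ N * h → IsP m pa → IsP m pb →
      (∀ α : J0 n m, |dP α.v a (pa - pb)| ≤ M * dist a b ^ (m - ∑ i, α.v i)) →
      ContDiff ℝ m Fl → ContDiff ℝ m Fr →
      (∀ y, ‖iteratedFDeriv ℝ m Fl y‖ ≤ γl) → (∀ y, ‖iteratedFDeriv ℝ m Fr y‖ ≤ γr) →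
      Fl =ᶠ[nhds a] evp pa → Fr =ᶠ[nhds b] evp pb →
      ∃ F : En n → ℝ, ContDiff ℝ m F ∧ (∀ y, ‖iteratedFDeriv ℝ m F y‖ ≤ γ) ∧
        (∀ y, dist a y ≤ j * h → F =ᶠ[nhds y] Fl) ∧ (∀ y, (j + 1) * h ≤ dist a y → F =ᶠ[nhds y] Fr) := by
  obtain ⟨K, hK0, hK⟩ := cutoff n m N
  set A : ℝ := (n + 1) ^ m * M + γr * 2 ^ m with hA
  have hA0 : 0 ≤ A := by positivity
  set B : ℝ := (A + (γl + γr)) * (1 + N) ^ m with hB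
  have hB0 : 0 ≤ B := by positivity
  refine ⟨γr + 2 ^ m * (K * (B * N ^ m)), by positivity, ?_⟩
  intro a b h j pa pb Fl Fr hh hj hab1 hab2 hpa hpb hcomp hFl hFr hbl hbr hla hrb
  obtain ⟨χ, hχ, hχ1, hχ0, hχK⟩ := hK a h hh j hj
  set δ := dist a b with hδ
  have hjN : (j : ℝ) + 1 ≤ N := by exact_mod_cast hj
  have hN1 : (1 : ℝ) ≤ N := by have : (0:ℝ) ≤ j := by positivity
                               linarith
  have hδh : h ≤ δ := by
    have : (0:ℝ) ≤ j := by positivity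
    nlinarith
  have hδ0 : 0 < δ := hh.trans_le hδh
  have hFrp : ContDiff ℝ m (Fr - evp pb) := hFr.sub (evp_contDiff pb m)
  have hpp : ContDiff ℝ m (evp (pa - pb)) := evp_contDiff _ m
  set g := Fl - Fr with hg
  have hgc : ContDiff ℝ m g := hFl.sub hFr
  have hga : ∀ k < m, ‖iteratedFDeriv ℝ k g a‖ ≤ A * δ ^ (m - k) := by
    intro k hk
    have hk' : ((k : ℕ) : WithTop ℕ∞) ≤ (m : ℕ) := by exact_mod_cast hk.le
    have e1 : g =ᶠ[nhds a] evp (pa - pb) - (Fr - evp pb) := by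
      filter_upwards [hla] with y hy
      simp only [hg, Pi.sub_apply, hy]
      simp [evp]
    rw [(e1.iteratedFDeriv ℝ k).eq_of_nhds, iteratedFDeriv_sub_apply (hpp.of_le hk').contDiffAt
      (hFrp.of_le hk').contDiffAt]
    have t1 : ‖iteratedFDeriv ℝ k (evp (pa - pb)) a‖ ≤ n ^ k * (M * δ ^ (m - k)) := by
      apply conv2 (hpp.of_le hk') a _ (by positivity)
      intro α hα
      obtain ⟨al, rfl⟩ := J0.surj (m := m) α (by omega)
      rw [← dP_eq, ← hα]
      exact hcomp al
    have t2 : ‖iteratedFDeriv ℝ k (Fr - evp pb) a‖ ≤ (0 + γr) * (1 + 1) ^ (m - k) * δ ^ (m - k) := by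
      apply growth hFrp b 0 γr 1 δ le_rfl hγr zero_le_one hδ0.le _ _ (m - k) k (by omega) a
        (by rw [Metric.mem_closedBall, one_mul])
      · intro y _
        rw [iteratedFDeriv_sub_apply hFr.contDiffAt (evp_contDiff pb m).contDiffAt, hpb.iter, sub_zero]
        exact hbr y
      · intro i hi
        have : Fr - evp pb =ᶠ[nhds b] 0 := by
          filter_upwards [hrb] with y hy
          simp [hy]
        rw [(this.iteratedFDeriv ℝ i).eq_of_nhds]
        simp
    refine (norm_sub_le _ _).trans ((add_le_add t1 t2).trans ?_)
    have u1 : (n : ℝ) ^ k ≤ (n + 1) ^ m :=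
      (pow_le_pow_left₀ (by positivity) (by linarith) k).trans
        (pow_le_pow_right₀ (by linarith [(Nat.cast_nonneg n : (0:ℝ) ≤ n)]) hk.le)
    have u2 : (1 + 1 : ℝ) ^ (m - k) ≤ 2 ^ m := by
      rw [one_add_one_eq_two]; exact pow_le_pow_right₀ one_le_two (by omega)
    calc _ ≤ (n + 1) ^ m * (M * δ ^ (m - k)) + (0 + γr) * 2 ^ m * δ ^ (m - k) := by gcongr
      _ = _ := by rw [hA]; ring
  have hgm : ∀ y, ‖iteratedFDeriv ℝ m g y‖ ≤ γl + γr := by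
    intro y
    rw [hg, iteratedFDeriv_sub_apply hFl.contDiffAt hFr.contDiffAt]
    exact (norm_sub_le _ _).trans (add_le_add (hbl y) (hbr y))
  have hgg := growth hgc a A (γl + γr) N δ hA0 (by positivity) (by positivity) hδ0.le
    (fun y _ => hgm y) hga
  have hP : ContDiff ℝ m (fun y => χ y * g y) := hχ.mul hgc
  have e0 : ∀ y, (j + 1) * h ≤ dist a y → (Fr + fun y => χ y * g y) =ᶠ[nhds y] Fr := by
    intro y hy
    filter_upwards [hχ0 y hy] with z hz
    simp [hz]
  refine ⟨Fr + fun y => χ y * g y, hFr.add hP, ?_, ?_, e0⟩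
  · intro y
    by_cases hy : (j + 1) * h ≤ dist a y
    · rw [((e0 y hy).iteratedFDeriv ℝ m).eq_of_nhds]
      exact (hbr y).trans (le_add_of_nonneg_right (by positivity))
    · push Not at hy
      rw [iteratedFDeriv_add_apply hFr.contDiffAt hP.contDiffAt]
      refine (norm_add_le _ _).trans (add_le_add (hbr y) ?_)
      refine (norm_iteratedFDeriv_mul_le hχ hgc y le_rfl).trans ?_
      have hyB : y ∈ Metric.closedBall a (N * δ) := by
        rw [Metric.mem_closedBall, dist_comm]
        refine hy.le.trans ?_
        gcongr
      have term : ∀ i ∈ Finset.range (m + 1), (m.choose i : ℝ) * ‖iteratedFDeriv ℝ i χ y‖ *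
          ‖iteratedFDeriv ℝ (m - i) g y‖ ≤ (m.choose i : ℝ) * (K * (B * N ^ m)) := by
        intro i hi
        have hi : i ≤ m := by have := Finset.mem_range.1 hi; omega
        have h1 := hgg i (m - i) (by omega) y hyB
        have h2 := hχK i hi y
        rw [mul_assoc]
        refine mul_le_mul_of_nonneg_left ?_ (by positivity)
        have h3 : δ ^ i ≤ N ^ m * h ^ i := by
          calc δ ^ i ≤ (N * h) ^ i := pow_le_pow_left₀ hδ0.le hab2 i
            _ = N ^ i * h ^ i := mul_pow _ _ _
            _ ≤ N ^ m * h ^ i := by gcongr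
        have h4 : (1 + (N : ℝ)) ^ i ≤ (1 + N) ^ m := pow_le_pow_right₀ (by linarith) hi
        calc _ ≤ ‖iteratedFDeriv ℝ i χ y‖ * ((A + (γl + γr)) * (1 + N) ^ i * δ ^ i) := by gcongr
          _ ≤ ‖iteratedFDeriv ℝ i χ y‖ * ((A + (γl + γr)) * (1 + N) ^ m * (N ^ m * h ^ i)) := by gcongr
          _ = (‖iteratedFDeriv ℝ i χ y‖ * h ^ i) * (B * N ^ m) := by rw [hB]; ring
          _ ≤ _ := by gcongr
      refine (Finset.sum_le_sum term).trans ?_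
      rw [← Finset.sum_mul]
      refine mul_le_mul_of_nonneg_right (le_of_eq ?_) (by positivity)
      exact_mod_cast Nat.sum_range_choose m
  · intro y hy
    filter_upwards [hχ1 y hy] with z hz
    simp [hz, hg]

theorem gluing {ι : Type} (n m N : ℕ) (hm : 1 ≤ m) (M : ℝ) (hM : 0 ≤ M) : ∀ τ : T ι,
    ∃ γ : ℝ, 0 ≤ γ ∧ ∀ pt : ι → En n, Geo N pt τ → ∀ p : ι → MvPolynomial (Fin n) ℝ, (∀ x, IsP m (p x)) →
      NodeP (fun x y _ => ∀ α : J0 n m, |dP α.v (pt x) (p x - p y)| ≤ M * dist (pt x) (pt y) ^ (m - ∑ i, α.v i)) τ →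
      ∃ F : En n → ℝ, ContDiff ℝ m F ∧ (∀ y, ‖iteratedFDeriv ℝ m F y‖ ≤ γ) ∧
        ∀ x ∈ τ.leaves, F =ᶠ[nhds (pt x)] evp (p x)
  | leaf i => by
    refine ⟨0, le_rfl, fun pt _ p hp _ => ⟨evp (p i), evp_contDiff _ _, fun y => ?_, fun x hx => ?_⟩⟩
    · rw [(hp i).iter]; simp
    · simp only [leaves, Finset.mem_singleton] at hx
      subst hx; rfl
  | node l r => by
    obtain ⟨γl, hγl, Hl⟩ := gluing n m N hm M hM l
    obtain ⟨γr, hγr, Hr⟩ := gluing n m N hm M hM r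
    obtain ⟨γ, hγ, H⟩ := glue1 n m N hm M γl γr hM hγl hγr
    refine ⟨γ, hγ, fun pt hgeo p hp hnode => ?_⟩
    obtain ⟨hgl, hgr, h, hh, j, hj, g1, g2, g3⟩ := hgeo
    obtain ⟨nl, nr, nn⟩ := hnode
    obtain ⟨Fl, cl, bl, el⟩ := Hl pt hgl p hp nl
    obtain ⟨Fr, cr, br, er⟩ := Hr pt hgr p hp nr
    obtain ⟨F, c, b, e1, e2⟩ := H (pt l.base) (pt r.base) h j (p l.base) (p r.base) Fl Fr hh hj
      (g2 _ (base_mem r)) (g3 _ (base_mem r)) (hp _) (hp _) nn cl cr bl br (el _ (base_mem l)) (er _ (base_mem r))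
    refine ⟨F, c, b, fun x hx => ?_⟩
    simp only [leaves, Finset.mem_union] at hx
    rcases hx with hx | hx
    · exact (e1 _ (g1 x hx)).trans (el x hx)
    · exact (e2 _ (g2 x hx)).trans (er x hx)

theorem pd1_germ {n : ℕ} (i : Fin n) {f g : En n → ℝ} {x : En n} (h : f =ᶠ[nhds x] g) :
    pd1 i f =ᶠ[nhds x] pd1 i g := by
  filter_upwards [h.fderiv (𝕜 := ℝ)] with y hy
  simp [pd1, hy]

theorem dl_germ {n : ℕ} (l : List (Fin n)) {f g : En n → ℝ} {x : En n} (h : f =ᶠ[nhds x] g) :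
    dl l f =ᶠ[nhds x] dl l g := by
  induction l with
  | nil => exact h
  | cons i l ih => exact pd1_germ i ih

theorem jet_germ {n m : ℕ} {f g : En n → ℝ} {x : En n} (h : f =ᶠ[nhds x] g) :
    jetScalar m f x = jetScalar m g x := by
  rw [jet_eq, jet_eq]
  congr 1; ext α
  rw [pdalpha_eq_dl, pdalpha_eq_dl, (dl_germ _ h).eq_of_nhds]
end WFP

namespace WFP
open T

theorem card_J0 {n m : ℕ} (hm : 1 ≤ m) : Fintype.card (J0 n m) ≤ Nat.choose (n + m - 1) n := by
  let f : J0 n m → Sym (Option (Fin n)) (m - 1) := fun α =>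
    ⟨∑ i, Multiset.replicate (α.v i) (some i) + Multiset.replicate (m - 1 - ∑ i, α.v i) none, by
      have := α.lt hm
      rw [Multiset.card_add, Multiset.card_sum]
      simp only [Multiset.card_replicate]
      omega⟩
  have hf : Function.Injective f := by
    intro α β h
    apply J0.v_inj
    ext i
    have h1 := congrArg (fun s : Sym (Option (Fin n)) (m - 1) => Multiset.count (some i) s.1) h
    simpa [f, Multiset.count_add, Multiset.count_sum', Multiset.count_replicate] using h1
  have h := Fintype.card_le_of_injective f hf
  rw [Sym.card_sym_eq_choose, Fintype.card_option, Fintype.card_fin] at h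
  have e : n + 1 + (m - 1) - 1 = n + m - 1 := by omega
  rw [e] at h
  have e2 : Nat.choose (n + m - 1) (m - 1) = Nat.choose (n + m - 1) n :=
    Nat.choose_symm_of_eq_add (by omega)
  omega

theorem pdalpha_sub {n : ℕ} (α : Fin n → ℕ) {f g : En n → ℝ} {k : ℕ} (hk : ∑ i, α i = k)
    (hf : ContDiff ℝ k f) (hg : ContDiff ℝ k g) (x : En n) :
    pdalpha α (f - g) x = pdalpha α f x - pdalpha α g x := by
  have hk' : (lal α (List.finRange n)).length = k := by rw [lal_length, hk]
  subst hk'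
  rw [pdalpha_eq_dl, pdalpha_eq_dl, pdalpha_eq_dl, dl_eq_iter _ hf, dl_eq_iter _ hg, dl_eq_iter _ (f := f - g) (hf.sub hg),
    iteratedFDeriv_sub_apply hf.contDiffAt hg.contDiffAt]
  rfl

def Cw (n m : ℕ) : ℝ := (n + 1) ^ m * 2 ^ m

theorem Cw_pos (n m : ℕ) : 0 < Cw n m := by unfold Cw; positivity

theorem npow_le (n : ℕ) {k m : ℕ} (h : k ≤ m) : (n : ℝ) ^ k ≤ (n + 1) ^ m :=
  (pow_le_pow_left₀ (by positivity) (by linarith) k).trans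
    (pow_le_pow_right₀ (by linarith [(Nat.cast_nonneg n : (0:ℝ) ≤ n)]) h)

theorem isP_jet {n m : ℕ} (hm : 1 ≤ m) (f : En n → ℝ) (x : En n) : IsP m (jetScalar m f x) := by
  rw [jet_eq]; exact isP_Psi hm _ _

theorem dP_jet {n m : ℕ} (f : En n → ℝ) (x : En n) (α : J0 n m) :
    dP α.v x (jetScalar m f x) = pdalpha α.v f x := by
  rw [jet_eq, dP_Psi]

theorem whitney {n m : ℕ} (hm : 1 ≤ m) {f : En n → ℝ} (hf : ContDiff ℝ m f)
    (h1 : ∀ α : Fin n → ℕ, ∑ i, α i = m → ∀ x, |pdalpha α f x| ≤ 1) (x y : En n) (α : J0 n m) :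
    |dP α.v x (jetScalar m f x - jetScalar m f y)| ≤ Cw n m * dist x y ^ (m - ∑ i, α.v i) := by
  set q := jetScalar m f y with hq
  have hqP : IsP m q := isP_jet hm f y
  have hle : ∀ k : ℕ, k ≤ m → ((k : ℕ) : WithTop ℕ∞) ≤ (m : ℕ) := fun k hk => by exact_mod_cast hk
  have hg : ContDiff ℝ m (f - evp q) := hf.sub (evp_contDiff q m)
  have hα := α.lt hm
  rw [map_sub, dP_jet, dP_eq, ← pdalpha_sub α.v rfl (hf.of_le (hle _ hα.le)) (evp_contDiff q _)]
  refine (conv1 α.v rfl (hg.of_le (hle _ hα.le)) x).trans ?_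
  have := growth hg y 0 (n ^ m * 1) 1 (dist x y) le_rfl (by positivity) zero_le_one dist_nonneg ?_ ?_
    (m - ∑ i, α.v i) (∑ i, α.v i) (by omega) x (by rw [Metric.mem_closedBall, one_mul])
  · refine this.trans ?_
    refine mul_le_mul_of_nonneg_right ?_ (by positivity)
    unfold Cw
    have u1 := npow_le n (le_refl m)
    have u2 : (1 + 1 : ℝ) ^ (m - ∑ i, α.v i) ≤ 2 ^ m := by
      rw [one_add_one_eq_two]; exact pow_le_pow_right₀ one_le_two (by omega)
    rw [zero_add, mul_one]
    gcongr
  · intro z _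
    rw [iteratedFDeriv_sub_apply hf.contDiffAt (evp_contDiff q m).contDiffAt, hqP.iter, sub_zero]
    exact conv2 hf z 1 zero_le_one fun β hβ => h1 β hβ z
  · intro k hk
    have := conv2 (hg.of_le (hle _ hk.le)) y 0 le_rfl (fun β hβ => by
      rw [pdalpha_sub β hβ (hf.of_le (hle _ hk.le)) (evp_contDiff q _)]
      obtain ⟨b, rfl⟩ := J0.surj (m := m) β (by omega)
      rw [← dP_eq, hq, dP_jet, sub_self, abs_zero])
    simpa using this

abbrev JJ (n m D : ℕ) : Type := J0 n m × Fin D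

def sc {n m : ℕ} (δ : ℝ) (α : J0 n m) : ℝ := Cw n m * δ ^ (m - ∑ i, α.v i)

theorem sc_pos {n m : ℕ} {δ : ℝ} (hδ : 0 < δ) (α : J0 n m) : 0 < sc δ α :=
  mul_pos (Cw_pos _ _) (by positivity)

def pj {n m D : ℕ} (v : JJ n m D → ℝ) (j : Fin D) : MvPolynomial (Fin n) ℝ :=
  Psi 0 (fun α : J0 n m => v (α, j))

theorem isP_pj {n m D : ℕ} (hm : 1 ≤ m) (v : JJ n m D → ℝ) (j : Fin D) : IsP m (pj v j) := isP_Psi hm _ _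

theorem pj_add {n m D : ℕ} (v w : JJ n m D → ℝ) (j : Fin D) : pj (v + w) j = pj v j + pj w j := by
  unfold pj; rw [← map_add]; rfl

theorem pj_sub {n m D : ℕ} (v w : JJ n m D → ℝ) (j : Fin D) : pj (v - w) j = pj v j - pj w j := by
  unfold pj; rw [← map_sub]; rfl

theorem pj_smul {n m D : ℕ} (c : ℝ) (v : JJ n m D → ℝ) (j : Fin D) : pj (c • v) j = c • pj v j := by
  unfold pj; rw [← map_smul]; rfl

theorem pj_of {n m D : ℕ} (hm : 1 ≤ m) (p : Fin D → MvPolynomial (Fin n) ℝ) (hp : ∀ j, IsP m (p j)) (j : Fin D) :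
    pj (fun a : JJ n m D => dP a.1.v 0 (p a.2)) j = p j := Psi_dP hm (hp j) 0

def ee {n m D : ℕ} (hm : 1 ≤ m) (z : En n) (δ : ℝ) (hδ : 0 < δ) : (JJ n m D → ℝ) ≃ₗ[ℝ] (JJ n m D → ℝ) where
  toFun v a := dP a.1.v z (pj v a.2) / sc δ a.1
  map_add' v w := by
    ext a; simp only [pj_add, map_add, Pi.add_apply, add_div]
  map_smul' c v := by
    ext a; simp only [pj_smul, map_smul, Pi.smul_apply, smul_eq_mul, RingHom.id_apply, mul_div_assoc]
  invFun w a := dP a.1.v 0 (Psi z (fun α : J0 n m => sc δ α * w (α, a.2)))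
  left_inv v := by
    ext ⟨α, j⟩
    have : (fun α : J0 n m => sc δ α * (dP α.v z (pj v j) / sc δ α)) = fun α : J0 n m => dP α.v z (pj v j) := by
      ext α; field_simp [(sc_pos hδ α).ne']
    simp only [this]
    rw [Psi_dP hm (isP_pj hm v j), pj, dP_Psi]
  right_inv w := by
    ext ⟨α, j⟩
    simp only
    rw [pj_of hm (fun j => Psi z (fun α : J0 n m => sc δ α * w (α, j))) (fun j => isP_Psi hm _ _), dP_Psi]
    field_simp [(sc_pos hδ α).ne']

theorem ee_apply {n m D : ℕ} (hm : 1 ≤ m) (z : En n) (δ : ℝ) (hδ : 0 < δ) (v : JJ n m D → ℝ) (a : JJ n m D) :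
    ee hm z δ hδ v a = dP a.1.v z (pj v a.2) / sc δ a.1 := rfl

theorem ee_symm {n m D : ℕ} (hm : 1 ≤ m) (z : En n) (δ : ℝ) (hδ : 0 < δ) (w : JJ n m D → ℝ) :
    (ee hm z δ hδ).symm w = fun a => dP a.1.v 0 (Psi z (fun α : J0 n m => sc δ α * w (α, a.2))) := rfl

theorem ee_nest {n m D : ℕ} (hm : 1 ≤ m) (N : ℕ) (x z : En n) (δ δ' : ℝ) (hδ : 0 < δ) (hδ' : 0 < δ')
    (h1 : dist x z ≤ δ) (h2 : δ' ≤ 2 * N * δ) (w : JJ n m D → ℝ) (hw : ∀ b, |w b| ≤ 1) (a : JJ n m D) :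
    |ee hm x δ hδ ((ee hm z δ' hδ').symm w) a| ≤ (n + 1) ^ m * (2 * N + 1) ^ m * 2 ^ m := by
  obtain ⟨α, j⟩ := a
  have hα := α.lt hm
  set p := Psi z (fun α : J0 n m => sc δ' α * w (α, j)) with hp
  have hpP : IsP m p := isP_Psi hm _ _
  have hc := Cw_pos n m
  rw [ee_apply, ee_symm,
    pj_of hm (fun j => Psi z (fun α : J0 n m => sc δ' α * w (α, j)))
      (fun j => isP_Psi hm _ _)]
  show |dP α.v x p / sc δ α| ≤ _
  rw [abs_div, abs_of_pos (sc_pos hδ α), div_le_iff₀ (sc_pos hδ α), dP_eq]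
  refine (conv1 α.v rfl (evp_contDiff p _) x).trans ?_
  have := growth (evp_contDiff p m) z ((n + 1) ^ m * (2 * N + 1) ^ m * Cw n m) 0 1 δ (by positivity) le_rfl
    zero_le_one hδ.le (fun y _ => by rw [hpP.iter]; simp) ?_
    (m - ∑ i, α.v i) (∑ i, α.v i) (by omega) x (by rw [Metric.mem_closedBall, one_mul]; exact h1)
  · refine this.trans ?_
    have u2 : (1 + 1 : ℝ) ^ (m - ∑ i, α.v i) ≤ 2 ^ m := by
      rw [one_add_one_eq_two]; exact pow_le_pow_right₀ one_le_two (by omega)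
    unfold sc
    rw [add_zero]
    calc _ ≤ (n + 1) ^ m * (2 * N + 1) ^ m * Cw n m * 2 ^ m * δ ^ (m - ∑ i, α.v i) := by gcongr
      _ = _ := by ring
  · intro k hk
    refine (conv2 (evp_contDiff p k) z (Cw n m * δ' ^ (m - k)) (by positivity) ?_).trans ?_
    · intro β hβ
      obtain ⟨β', rfl⟩ := J0.surj (m := m) β (by omega)
      rw [← dP_eq, hp, dP_Psi, abs_mul, abs_of_pos (sc_pos hδ' β'), ← hβ]
      refine (mul_le_mul_of_nonneg_left (?_ : _ ≤ (1 : ℝ)) (sc_pos hδ' β').le).trans (by rw [mul_one]; rfl)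
      exact hw _
    · have h3 : δ' ^ (m - k) ≤ (2 * N + 1) ^ m * δ ^ (m - k) := by
        calc δ' ^ (m - k) ≤ ((2 * N + 1) * δ) ^ (m - k) :=
              pow_le_pow_left₀ hδ'.le (h2.trans (by gcongr; linarith)) _
          _ = (2 * N + 1) ^ (m - k) * δ ^ (m - k) := mul_pow _ _ _
          _ ≤ _ := by
            gcongr
            · linarith [(Nat.cast_nonneg N : (0:ℝ) ≤ N)]
            · omega
      have := npow_le n hk.le
      calc _ ≤ (n + 1) ^ m * (Cw n m * ((2 * N + 1) ^ m * δ ^ (m - k))) := by gcongr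
        _ = _ := by ring

theorem nodeP_pos {ι X : Type} [MetricSpace X] {N : ℕ} {pt : ι → X} : ∀ τ : T ι, Geo N pt τ →
    NodeP (fun x y _ => 0 < dist (pt x) (pt y)) τ
  | leaf _, _ => trivial
  | node l r, h => ⟨nodeP_pos l h.1, nodeP_pos r h.2.1, h.2.2.facts.1⟩

def dd {n : ℕ} (x y : En n) : ℝ := if dist x y = 0 then 1 else dist x y

theorem dd_pos {n : ℕ} (x y : En n) : 0 < dd x y := by
  unfold dd
  split_ifs with h
  · exact one_pos
  · exact lt_of_le_of_ne dist_nonneg (Ne.symm h)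

theorem dd_eq {n : ℕ} {x y : En n} (h : 0 < dist x y) : dd x y = dist x y := if_neg h.ne'

theorem convex_pj {n m D : ℕ} {G : Set (Fin D → MvPolynomial (Fin n) ℝ)} (hG : Convex ℝ G) :
    Convex ℝ {v : JJ n m D → ℝ | (fun j => pj v j) ∈ G} := by
  intro v hv w hw s t hs ht hst
  have := hG hv hw hs ht hst
  show (fun j => pj (s • v + t • w) j) ∈ G
  have e : (fun j => pj (s • v + t • w) j) = s • (fun j => pj v j) + t • (fun j => pj w j) := by
    funext j
    rw [pj_add, pj_smul, pj_smul]; rfl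
  rw [e]; exact this

def eN {n m D : ℕ} (hm : 1 ≤ m) {ι : Type} (pt : ι → En n) (x y : ι) : (JJ n m D → ℝ) ≃ₗ[ℝ] (JJ n m D → ℝ) :=
  ee hm (pt x) (dd (pt x) (pt y)) (dd_pos _ _)

theorem single_bd {J : Type} (_ : DecidableEq J) (b c : J) : |(Pi.single b 1 : J → ℝ) c| ≤ 1 := by
  rw [Pi.single_apply]; split_ifs <;> simp

theorem eN_nes {n m D N : ℕ} (hm : 1 ≤ m) {ι : Type} [Fintype ι] (τ : T ι) (pt : ι → En n) (hgeo : Geo N pt τ) :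
    Nes (nestE ((n + 1) ^ m * (2 * N + 1) ^ m * 2 ^ m) (eN (D := D) hm pt)) τ := by
  refine Nes.mono ?_ τ (nes_of_geo τ hgeo)
  intro x y z w h a b
  obtain ⟨q1, q2, q3, q4⟩ := h
  have h1 : dist (pt x) (pt z) ≤ dd (pt x) (pt y) := by rw [dd_eq q1]; exact q3
  have h2 : dd (pt z) (pt w) ≤ 2 * N * dd (pt x) (pt y) := by rw [dd_eq q1, dd_eq q2]; exact q4
  exact ee_nest hm N (pt x) (pt z) _ _ (dd_pos _ _) (dd_pos _ _) h1 h2 _ (single_bd _ b) a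

theorem pj_jet {n m D : ℕ} (hm : 1 ≤ m) (F : En n → Fin D → ℝ) (x : En n) (j : Fin D) :
    pj (fun a : JJ n m D => dP a.1.v 0 (jetD m F x a.2)) j = jetD m F x j :=
  by
  exact pj_of hm (jetD m F x) (fun j => isP_jet hm (fun y => F y j) x) j

theorem eN_comp {n m D : ℕ} (hm : 1 ≤ m) {ι : Type} [Fintype ι] (τ : T ι) (pt : ι → En n) (F : En n → Fin D → ℝ)
    (hF : ContDiff ℝ m F) (hF1 : CmHomogLE m F 1) :
    NodeP (compP 1 (eN hm pt) (fun x (a : JJ n m D) => dP a.1.v 0 (jetD m F (pt x) a.2))) τ := by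
  have hFj : ∀ j, ContDiff ℝ m (fun y => F y j) := fun j => contDiff_pi.1 hF j
  refine NodeP.of_mem τ fun x y R _ _ a => ?_
  rw [eN, ee_apply, pj_sub, pj_jet hm, pj_jet hm]
  rcases (dist_nonneg (x := pt x) (y := pt y)).eq_or_lt with h0 | h0
  · have : pt x = pt y := dist_eq_zero.1 h0.symm
    rw [this]; simp
  · rw [dd_eq h0, abs_div, abs_of_pos (sc_pos h0 _), div_le_one (sc_pos h0 _)]
    exact whitney hm (hFj a.2) (fun α hα z => hF1 α hα z a.2) (pt x) (pt y) a.1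

theorem eN_node {n m D N : ℕ} (hm : 1 ≤ m) {ι : Type} [Fintype ι] (τ : T ι) (pt : ι → En n) (hgeo : Geo N pt τ)
    (C : ℝ) (P : ι → JJ n m D → ℝ) (hP : NodeP (compP C (eN hm pt) P) τ) (j : Fin D) :
    NodeP (fun x y _ => ∀ α : J0 n m, |dP α.v (pt x) (pj (P x) j - pj (P y) j)| ≤
      C * Cw n m * dist (pt x) (pt y) ^ (m - ∑ i, α.v i)) τ := by
  refine NodeP.mono ?_ τ (NodeP.and τ hP (nodeP_pos τ hgeo))
  rintro x y R ⟨h1, h0⟩ α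
  have := h1 (α, j)
  rw [eN, ee_apply, pj_sub, dd_eq h0, abs_div, abs_of_pos (sc_pos h0 _), div_le_iff₀ (sc_pos h0 _)] at this
  refine this.trans (le_of_eq ?_)
  unfold sc; ring

theorem card_JJ {n m D : ℕ} (hm : 1 ≤ m) : Fintype.card (JJ n m D) ≤ D * Nat.choose (n + m - 1) n := by
  rw [Fintype.card_prod, Fintype.card_fin, mul_comm]
  exact Nat.mul_le_mul_left _ (card_J0 hm)

theorem core (n m D N : ℕ) (hm : 1 ≤ m) {ι : Type} [Fintype ι] (τ : T ι) (hnd : τ.Nodup) (hl : ∀ i, i ∈ τ.leaves) :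
    ∃ γ : ℝ, 0 ≤ γ ∧ ∀ pt : ι → En n, Geo N pt τ → ∀ G : ι → Set (Fin D → MvPolynomial (Fin n) ℝ),
      (∀ x, Convex ℝ (G x)) →
      (∀ B : Finset ι, B.card ≤ 2 ^ (D * Nat.choose (n + m - 1) n) →
        ∃ F : En n → Fin D → ℝ, ContDiff ℝ m F ∧ CmHomogLE m F 1 ∧ ∀ x ∈ B, jetD m F (pt x) ∈ G x) →
      ∃ F : En n → Fin D → ℝ, ContDiff ℝ m F ∧ CmHomogLE m F γ ∧ ∀ x, jetD m F (pt x) ∈ G x := by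
  obtain ⟨C, hC, HC⟩ := select (J := JJ n m D) τ hnd hl ((n + 1) ^ m * (2 * N + 1) ^ m * 2 ^ m)
  obtain ⟨γ, hγ, Hγ⟩ := gluing n m N hm (C * Cw n m) (mul_pos hC (Cw_pos n m)).le τ
  refine ⟨γ, hγ, fun pt hgeo G hG hyp => ?_⟩
  have hsel : ∀ B : Finset ι, B.card ≤ 2 ^ Fintype.card (JJ n m D) → ∃ P : ι → JJ n m D → ℝ,
      (∀ x ∈ B, P x ∈ {v : JJ n m D → ℝ | (fun j => pj v j) ∈ G x}) ∧ NodeP (compP 1 (eN hm pt) P) τ := by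
    intro B hB
    obtain ⟨F, hF, hF1, hFG⟩ := hyp B (hB.trans (Nat.pow_le_pow_right two_pos (card_JJ hm)))
    refine ⟨fun x a => dP a.1.v 0 (jetD m F (pt x) a.2), fun x hx => ?_, eN_comp hm τ pt F hF hF1⟩
    show (fun j => pj (fun a : JJ n m D => dP a.1.v 0 (jetD m F (pt x) a.2)) j) ∈ G x
    rw [funext (pj_jet hm F (pt x))]
    exact hFG x hx
  obtain ⟨P, hPG, hPc⟩ := HC (eN hm pt) (eN_nes hm τ pt hgeo) _ (fun x => convex_pj (hG x)) hsel
  have hj : ∀ j : Fin D, ∃ F : En n → ℝ, ContDiff ℝ m F ∧ (∀ y, ‖iteratedFDeriv ℝ m F y‖ ≤ γ) ∧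
        ∀ x ∈ τ.leaves, F =ᶠ[nhds (pt x)] evp (pj (P x) j) :=
    fun j => Hγ pt hgeo (fun x => pj (P x) j) (fun x => isP_pj hm _ _) (eN_node hm τ pt hgeo C P hPc j)
  choose F hFc hFb hFe using hj
  refine ⟨fun y j => F j y, contDiff_pi.2 fun j => hFc j, fun α hα y j => (conv1 α hα (hFc j) y).trans (hFb j y), ?_⟩
  intro x
  have : jetD m (fun y j => F j y) (pt x) = fun j => pj (P x) j := by
    funext j
    show jetScalar m (F j) (pt x) = _
    rw [jet_germ (hFe j x (hl x)), jet_evp hm (isP_pj hm _ _)]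
  rw [this]
  exact hPG x

theorem main (m n D : ℕ) (hm : 1 ≤ m) (N : ℕ) :
    ∃ γ : ℝ, 0 < γ ∧
      ∀ S : Finset (En n), S.card ≤ N →
        ∀ G : En n → Set (Fin D → MvPolynomial (Fin n) ℝ),
          (∀ x ∈ S, Convex ℝ (G x)) →
          (∀ S' : Finset (En n), S' ⊆ S → S'.card ≤ 2 ^ (D * Nat.choose (n + m - 1) n) →
            ∃ F : En n → Fin D → ℝ, ContDiff ℝ m F ∧ CmHomogLE m F 1 ∧
              ∀ x ∈ S', jetD m F x ∈ G x) →
          ∃ F : En n → Fin D → ℝ, ContDiff ℝ m F ∧ CmHomogLE m F γ ∧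
            ∀ x ∈ S, jetD m F x ∈ G x := by
  have h1 : ∀ (k : ℕ) (τ : T (Fin k)), ∃ γ : ℝ, 0 ≤ γ ∧ (τ.Nodup → (∀ i, i ∈ τ.leaves) → 
      ∀ pt : Fin k → En n, Geo N pt τ → ∀ G : Fin k → Set (Fin D → MvPolynomial (Fin n) ℝ),
      (∀ x, Convex ℝ (G x)) →
      (∀ B : Finset (Fin k), B.card ≤ 2 ^ (D * Nat.choose (n + m - 1) n) →
        ∃ F : En n → Fin D → ℝ, ContDiff ℝ m F ∧ CmHomogLE m F 1 ∧ ∀ x ∈ B, jetD m F (pt x) ∈ G x) →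
      ∃ F : En n → Fin D → ℝ, ContDiff ℝ m F ∧ CmHomogLE m F γ ∧ ∀ x, jetD m F (pt x) ∈ G x) := by
    intro k τ
    by_cases h : τ.Nodup ∧ ∀ i, i ∈ τ.leaves
    · obtain ⟨γ, h0, H⟩ := core n m D N hm τ h.1 h.2
      exact ⟨γ, h0, fun _ _ => H⟩
    · exact ⟨0, le_rfl, fun a b => absurd ⟨a, b⟩ h⟩
  choose g hg0 hg using h1
  let tr : (k : ℕ) → Finset (T (Fin k)) := fun k => (finite_depth (ι := Fin k) k).toFinset
  have hs0 : ∀ k, 0 ≤ ∑ τ ∈ tr k, g k τ := fun k => Finset.sum_nonneg fun τ _ => hg0 k τ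
  have hS0 : 0 ≤ ∑ k ∈ Finset.range (N + 1), ∑ τ ∈ tr k, g k τ := Finset.sum_nonneg fun k _ => hs0 k
  refine ⟨1 + ∑ k ∈ Finset.range (N + 1), ∑ τ ∈ tr k, g k τ, by linarith, ?_⟩
  intro S hS G hG hyp
  rcases S.eq_empty_or_nonempty with rfl | ⟨a, ha⟩
  · obtain ⟨F, hF, hF1, -⟩ := hyp ∅ (by simp) (by simp)
    exact ⟨F, hF, fun α hα x j => (hF1 α hα x j).trans (by linarith), by simp⟩
  · let E := S.equivFin
    let pt : Fin S.card → En n := fun i => (E.symm i : En n)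
    have hinj : Function.Injective pt := Subtype.val_injective.comp E.symm.injective
    have hmem : ∀ i, pt i ∈ S := fun i => (E.symm i).2
    obtain ⟨τ, -, hlv, hnd, hdep, hgeo⟩ := cluster N pt hinj S.card Finset.univ (by simp) hS (E ⟨a, ha⟩) (Finset.mem_univ _)
    obtain ⟨F, hF, hFb, hFG⟩ := hg S.card τ hnd (fun i => by rw [hlv]; exact Finset.mem_univ i) pt hgeo
      (fun i => G (pt i)) (fun i => hG _ (hmem i)) (fun B hB => by
        obtain ⟨F, hF, hF1, hFG⟩ := hyp (B.image pt)
          (fun x hx => by obtain ⟨i, -, rfl⟩ := Finset.mem_image.1 hx; exact hmem i)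
          (Finset.card_image_le.trans hB)
        exact ⟨F, hF, hF1, fun x hx => hFG _ (Finset.mem_image_of_mem _ hx)⟩)
    have hle : g S.card τ ≤ 1 + ∑ k ∈ Finset.range (N + 1), ∑ τ ∈ tr k, g k τ := by
      have a1 : g S.card τ ≤ ∑ τ ∈ tr S.card, g S.card τ :=
        Finset.single_le_sum (f := g S.card) (fun τ _ => hg0 _ τ) (by simp [tr]; omega)
      have a2 := Finset.single_le_sum (f := fun k => ∑ τ ∈ tr k, g k τ) (fun k _ => hs0 k)
        (Finset.mem_range.2 (by omega : S.card < N + 1))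
      linarith
    refine ⟨F, hF, fun α hα x j => (hFb α hα x j).trans hle, fun x hx => ?_⟩
    have := hFG (E ⟨x, hx⟩)
    simpa [pt] using this
end WFP

/-- **Weak finiteness principle for `Ċ^m` jet selection** (Theorem 1.4, homogeneous flavor):
the finiteness constant is `2^(dim 𝒫⃗) = 2^(D·binom(n+m-1,n))`, and `γ` depends only on
`m, n, D` and a bound `N` on `|S|`. -/
theorem weak_finiteness_principle_Cm_homogeneous
    (m n D : ℕ) (hm : 1 ≤ m) (hn : 1 ≤ n) (hD : 1 ≤ D) (N : ℕ) (hN : 0 < N) :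
    ∃ γ : ℝ, 0 < γ ∧
      ∀ S : Finset (En n), S.card ≤ N → (∀ x ∈ S, ∀ y ∈ S, dist x y ≤ 1) →
        ∀ G : En n → Set (Fin D → MvPolynomial (Fin n) ℝ),
          (∀ x ∈ S, Convex ℝ (G x)) →
          (∀ x ∈ S, ∀ P ∈ G x, ∀ j, (P j).totalDegree ≤ m - 1) →
          (∀ S' : Finset (En n), S' ⊆ S → S'.card ≤ 2 ^ (D * Nat.choose (n + m - 1) n) →
            ∃ F : En n → Fin D → ℝ, ContDiff ℝ m F ∧ CmHomogLE m F 1 ∧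
              ∀ x ∈ S', jetD m F x ∈ G x) →
          ∃ F : En n → Fin D → ℝ, ContDiff ℝ m F ∧ CmHomogLE m F γ ∧
            ∀ x ∈ S, jetD m F x ∈ G x := by
  obtain ⟨γ, h0, H⟩ := WFP.main m n D hm N
  exact ⟨γ, h0, fun S hS _ G hG _ hyp => H S hS G hG hyp⟩
end
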